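/- Let k be a field of odd prime characteristic p and let (α|β) be a pair of compositions with |α| + |β| = n. For pairs (ξ, μ) of partitions with |α| + |ξ| + p|μ| = n write c(ξ,μ) = c^(p)_{β;(ξ,pμ)}. Then there is an isomorphism of kS_n-modules M(α|β) ⊕ ⨁_{(ξ,μ): c(ξ,μ) < 0} M(α∪ξ|pμ)^{⊕(−c(ξ,μ))} ≅ ⨁_{(ξ,μ): c(ξ,μ) > 0} M(α∪ξ|pμ)^{⊕ c(ξ,μ)}, where both direct sums run over pairs (ξ, μ) of partitions with |α| + |ξ| + p|μ| = n and pμ = (pμ_1,...,pμ_{ℓ(μ)}). -/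

import Mathlib

noncomputable section
open scoped DirectSum

/-- The index of the block (among consecutive blocks of sizes `γ_1, γ_2, …`) containing
position `x`; blocks are numbered starting from `0`. -/
def blockIdx (γ : List ℕ) (x : ℕ) : ℕ :=
  (List.range γ.length).countP fun j => decide ((γ.take (j + 1)).sum ≤ x)

/-- The Young subgroup of `S_n` attached to the finite sequence `γ`: permutations mapping
each of the consecutive blocks of sizes `γ_1, γ_2, …` to itself. -/
def youngSubgroup (n : ℕ) (γ : List ℕ) : Subgroup (Equiv.Perm (Fin n)) where
  carrier := {σ | ∀ x : Fin n, blockIdx γ (σ x) = blockIdx γ x}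
  one_mem' := fun _ => rfl
  mul_mem' := by
    intro a b ha hb x
    simpa [Equiv.Perm.mul_apply] using (ha (b x)).trans (hb x)
  inv_mem' := by
    intro a ha x
    simpa using (ha (a⁻¹ x)).symm

lemma youngSubgroup_mem {n : ℕ} {γ : List ℕ} (σ : youngSubgroup n γ) :
    ∀ x : Fin n, blockIdx γ ((σ : Equiv.Perm (Fin n)) x) = blockIdx γ x := σ.2

/-- Restriction of an element of a Young subgroup to the `j`-th block. -/
def blockRestrict (n : ℕ) (γ : List ℕ) (j : ℕ) :
    youngSubgroup n γ →* Equiv.Perm {x : Fin n // blockIdx γ (x : ℕ) = j} where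
  toFun σ := Equiv.Perm.subtypePerm (σ : Equiv.Perm (Fin n)) (fun x => by
    rw [youngSubgroup_mem σ x])
  map_one' := by
    ext x
    rfl
  map_mul' := by
    intro a b
    ext x
    rfl

/-- The sign of the restriction of an element of a Young subgroup to the `j`-th block,
viewed in the field `k`. -/
def blockSign (k : Type*) [Field k] (n : ℕ) (γ : List ℕ) (j : ℕ) :
    youngSubgroup n γ →* k :=
  ((Int.castRingHom k).toMonoidHom.comp (Units.coeHom ℤ)).comp
    (Equiv.Perm.sign.comp (blockRestrict n γ j))

/-- The character of the Young subgroup `S_α × S_β` affording `k(α) ⊠ sgn(β)`: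
`σ` acts by the product of the signs of the restrictions of `σ` to the `β`-blocks. -/
def chiHom (k : Type*) [Field k] (n : ℕ) (α β : List ℕ) :
    youngSubgroup n (α ++ β) →* k :=
  ∏ j ∈ Finset.Ico α.length (α.length + β.length), blockSign k n (α ++ β) j

/-- The group algebra `k S_n`. -/
abbrev GA (k : Type*) [Field k] (n : ℕ) : Type _ := MonoidAlgebra k (Equiv.Perm (Fin n))

/-- The left submodule of `k S_n` generated by the elements `σ - χ(σ)·1`, `σ ∈ S_α × S_β`,
where `χ` is the character of `k(α) ⊠ sgn(β)`. -/
def relSub (k : Type*) [Field k] (n : ℕ) (α β : List ℕ) : Submodule (GA k n) (GA k n) :=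
  Submodule.span (GA k n)
    {x | ∃ σ : youngSubgroup n (α ++ β),
      x = MonoidAlgebra.single (σ : Equiv.Perm (Fin n)) 1
            - MonoidAlgebra.single 1 (chiHom k n α β σ)}

/-- The signed Young permutation module
`M(α|β) = Ind_{S_α × S_β}^{S_n} (k(α) ⊠ sgn(β)) = k S_n ⊗_{k(S_α×S_β)} (k(α) ⊠ sgn(β))`,
realized as the quotient of `k S_n` by the left submodule generated by
`σ - χ(σ)·1` for `σ ∈ S_α × S_β`. -/
abbrev SYPM (k : Type*) [Field k] (n : ℕ) (α β : List ℕ) : Type _ :=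
  GA k n ⧸ relSub k n α β

/-- A partition: a weakly decreasing finite sequence of positive integers. -/
def IsPartitionL (l : List ℕ) : Prop := l.Pairwise (· ≥ ·) ∧ ∀ x ∈ l, 0 < x

/-- `c_λ^(p)`: the number of compositions of type `λ` all of whose partial sums are
not divisible by `p`. -/
def numCompM (m : ℕ) (l : List ℕ) : ℕ :=
  (l.permutations.dedup.filter fun δ => decide (∀ j < δ.length, ¬ m ∣ (δ.take (j + 1)).sum)).length

/-- `ε_λ = (-1)^(|λ|-ℓ(λ))`. -/
def epsL (l : List ℕ) : ℤ := (-1) ^ (l.sum - l.length)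

/-- `μ ∈ P(n;m)`: `μ` is a partition with `|μ| ≤ n` and `m ∣ n - |μ|`. -/
def MemPnm (n m : ℕ) (μ : List ℕ) : Prop := IsPartitionL μ ∧ μ.sum ≤ n ∧ m ∣ (n - μ.sum)

/-- Membership of the tuple `L = (ξ^(1), …, ξ^(s))` in `V(β;(ξ,mμ))`. -/
def Vmem (m : ℕ) (β ξ μ : List ℕ) (L : List (List ℕ)) : Prop :=
  L.length = β.length ∧
  (∀ i < β.length, MemPnm (β.getD i 0) m (L.getD i [])) ∧
  List.Perm L.flatten ξ ∧
  List.Perm (((List.range β.length).map fun i => β.getD i 0 - (L.getD i []).sum).filter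
      fun x => decide (x ≠ 0)) (μ.map (m * ·))

/-- `c^(m)_{β;(ξ,mμ)} = ∑_{(ξ^(1),…,ξ^(s)) ∈ V(β;(ξ,mμ))} ∏_i ε_{ξ^(i)} c^(m)_{ξ^(i)}`. -/
def cB (m : ℕ) (β ξ μ : List ℕ) : ℤ :=
  ∑ᶠ L ∈ {L : List (List ℕ) | Vmem m β ξ μ L},
    ∏ i ∈ Finset.range β.length, epsL (L.getD i []) * (numCompM m (L.getD i []) : ℤ)

/-- The weakly decreasing rearrangement of a finite sequence:
`α∪ξ = sortDesc (α ++ ξ)`. -/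
def sortDesc (l : List ℕ) : List ℕ := (Multiset.sort (l : Multiset ℕ) (· ≤ ·)).reverse

/-- The pair `(ξ, μ)` consists of partitions with `|α| + |ξ| + p|μ| = n`. -/
def CondPair (p n : ℕ) (α : List ℕ) (q : List ℕ × List ℕ) : Prop :=
  IsPartitionL q.1 ∧ IsPartitionL q.2 ∧ α.sum + q.1.sum + p * q.2.sum = n

open Classical in
/-- The multiplicity `-c^(p)_{β;(ξ,pμ)}` when this coefficient is negative, else `0`. -/
def negMult (p n : ℕ) (α β : List ℕ) (q : List ℕ × List ℕ) : ℕ :=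
  if CondPair p n α q ∧ cB p β q.1 q.2 < 0 then (-cB p β q.1 q.2).toNat else 0

open Classical in
/-- The multiplicity `c^(p)_{β;(ξ,pμ)}` when this coefficient is positive, else `0`. -/
def posMult (p n : ℕ) (α β : List ℕ) (q : List ℕ × List ℕ) : ℕ :=
  if CondPair p n α q ∧ 0 < cB p β q.1 q.2 then (cB p β q.1 q.2).toNat else 0

/-!
Colour `n` positions by even colours `a ∈ A` and odd colours `b ∈ B`. The symmetric group permutes
the colourings, with the sign that a permutation induces on the positions of odd colour, and the
signed Young permutation modules `M(α|β)` are the weight spaces of this representation. For an even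
colour `a` and an odd colour `b`, the operator `D` recolouring one position from `a` to `b` or from
`b` to `a`, with Koszul signs, commutes with the action, and `D²` multiplies a colouring by the
number `m` of its positions coloured `a` or `b`. So when `m` is invertible in `k`, the operator `D`
matches the colourings in which `a` occurs evenly often with those in which it occurs oddly often:
`⨁_{i even} M(i,α|m-i,β) ≅ ⨁_{i odd} M(i,α|m-i,β)`.

The summand `i = 0` expresses `M(α|m,β)` through modules with a smaller sign part. Repeating this
for every part of `β` until what remains is divisible by `p` produces one term for each tuple of
compositions with no partial sum divisible by `p`. The relations only ever get added up, so the
argument takes place in the monoid of isomorphism classes and needs no cancellation.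
-/

section IsoClass

universe u

variable (R : Type u) [Ring R]

/-- Isomorphism of `R`-modules, as an equivalence relation. -/
def moduleIsoSetoid : Setoid (ModuleCat.{u} R) where
  r M N := Nonempty (M ≃ₗ[R] N)
  iseqv := ⟨fun _ => ⟨.refl _ _⟩, fun ⟨e⟩ => ⟨e.symm⟩, fun ⟨e⟩ ⟨f⟩ => ⟨e.trans f⟩⟩

/-- Isomorphism classes of `R`-modules. They form a commutative monoid under direct sums, in which
no cancellation law is available. -/
def IsoClass : Type (u + 1) := Quotient (moduleIsoSetoid R)

/-- The isomorphism class `[M]` of an `R`-module `M`. -/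
def isoClass (M : Type u) [AddCommGroup M] [Module R M] : IsoClass R :=
  Quotient.mk (moduleIsoSetoid R) (ModuleCat.of R M)

variable {R}

lemma isoClass_eq_iff {M N : Type u} [AddCommGroup M] [Module R M] [AddCommGroup N] [Module R N] :
    isoClass R M = isoClass R N ↔ Nonempty (M ≃ₗ[R] N) :=
  Quotient.eq (r := moduleIsoSetoid R)

lemma isoClass_surjective (x : IsoClass R) :
    ∃ (M : Type u) (_ : AddCommGroup M) (_ : Module R M), isoClass R M = x :=
  Quotient.inductionOn x fun M => ⟨M, inferInstance, inferInstance, rfl⟩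

instance : Zero (IsoClass R) := ⟨isoClass R PUnit⟩

instance : Add (IsoClass R) :=
  ⟨Quotient.map₂ (fun M N => ModuleCat.of R (M × N))
    fun _ _ ⟨e⟩ _ _ ⟨f⟩ => ⟨e.prodCongr f⟩⟩

lemma isoClass_prod (M N : Type u) [AddCommGroup M] [Module R M] [AddCommGroup N] [Module R N] :
    isoClass R (M × N) = isoClass R M + isoClass R N := rfl

lemma isoClass_of_subsingleton (M : Type u) [AddCommGroup M] [Module R M] [Subsingleton M] :
    isoClass R M = 0 :=
  isoClass_eq_iff.2 ⟨.ofSubsingleton _ _⟩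

instance : AddCommMonoid (IsoClass R) where
  add_assoc x y z := by
    obtain ⟨M, _, _, rfl⟩ := isoClass_surjective x
    obtain ⟨N, _, _, rfl⟩ := isoClass_surjective y
    obtain ⟨L, _, _, rfl⟩ := isoClass_surjective z
    exact isoClass_eq_iff.2 ⟨.prodAssoc R M N L⟩
  zero_add x := by
    obtain ⟨M, _, _, rfl⟩ := isoClass_surjective x
    exact isoClass_eq_iff.2 ⟨.uniqueProd⟩
  add_zero x := by
    obtain ⟨M, _, _, rfl⟩ := isoClass_surjective x
    exact isoClass_eq_iff.2 ⟨.prodUnique⟩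
  add_comm x y := by
    obtain ⟨M, _, _, rfl⟩ := isoClass_surjective x
    obtain ⟨N, _, _, rfl⟩ := isoClass_surjective y
    exact isoClass_eq_iff.2 ⟨.prodComm R M N⟩
  nsmul := nsmulRec

lemma isoClass_pi_fin (m : ℕ) (M : Fin m → Type u) [∀ i, AddCommGroup (M i)]
    [∀ i, Module R (M i)] : isoClass R (∀ i, M i) = ∑ i, isoClass R (M i) := by
  induction m with
  | zero => simp [isoClass_of_subsingleton]
  | succ m ih =>
    rw [Fin.sum_univ_succ, ← ih, ← isoClass_prod]
    exact isoClass_eq_iff.2 ⟨(Fin.consLinearEquiv R M).symm⟩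

lemma isoClass_directSum {ι : Type} [Fintype ι] (M : ι → Type u)
    [∀ i, AddCommGroup (M i)] [∀ i, Module R (M i)] :
    isoClass R (⨁ i, M i) = ∑ i, isoClass R (M i) := by
  classical
  let e := (Fintype.equivFin ι).symm
  rw [← Equiv.sum_comp e, ← isoClass_pi_fin]
  exact isoClass_eq_iff.2 ⟨(DirectSum.linearEquivFunOnFintype R ι M).trans
    (LinearEquiv.piCongrLeft R M e).symm⟩

lemma isoClass_iSup_of_iSupIndep {ι : Type} [Fintype ι] {V : Type u} [AddCommGroup V]
    [Module R V] {S : ι → Submodule R V} (hS : iSupIndep S) :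
    isoClass R ↥(⨆ i, S i) = ∑ i, isoClass R (S i) := by
  classical
  rw [← isoClass_directSum (fun i => S i), isoClass_eq_iff]
  exact ⟨.trans (.ofEq _ _ (Submodule.iSup_eq_range_dfinsupp_lsum S))
    (LinearEquiv.ofInjective _ hS.dfinsupp_lsum_injective).symm⟩

lemma isoClass_directSum_sigma_fin_card {ι κ : Type} [DecidableEq κ] (s : Finset ι) (g : ι → κ)
    {m : κ → ℕ} (hm : ∀ q, m q = (s.filter fun i => g i = q).card) (M : κ → Type u)
    [∀ q, AddCommGroup (M q)] [∀ q, Module R (M q)] :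
    isoClass R (⨁ t : Σ q, Fin (m q), M t.1) = ∑ i ∈ s, isoClass R (M (g i)) := by
  let fiber (q : κ) : Fin (m q) ≃ {i : s // g i = q} :=
    (finCongr (hm q)).trans <| (Finset.equivFin _).symm.trans <|
      (Equiv.subtypeEquivRight fun _ => Finset.mem_filter).trans
        (Equiv.subtypeSubtypeEquivSubtypeInter _ _).symm
  let e : (Σ q, Fin (m q)) ≃ s :=
    (Equiv.sigmaCongrRight fiber).trans (Equiv.sigmaFiberEquiv fun i : s => g i)
  have he (t : Σ q, Fin (m q)) : g (e t) = t.1 := (fiber t.1 t.2).2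
  let _ : Fintype (Σ q, Fin (m q)) := .ofEquiv s e.symm
  rw [isoClass_directSum, ← Finset.sum_coe_sort s, ← e.sum_comp]
  exact Finset.sum_congr rfl fun t _ => by rw [he t]

end IsoClass

section InversionSign

open Equiv (Perm)

variable {X Y Z : Type*} [LinearOrder X] [LinearOrder Y] [LinearOrder Z]

/-- `-1` if the map `u` reverses the order of the unordered pair `{x, y}`, else `1`. -/
def pairSign (u : X → Y) : Sym2 X → ℤˣ :=
  Sym2.lift ⟨fun x y => if x < y ∧ u y < u x ∨ y < x ∧ u x < u y then -1 else 1, fun x y => by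
    simp only [or_comm]⟩

/-- The sign `(-1)^m`, where `m` is the number of inversions of `u` among the elements of `s`. -/
def inversionSign (s : Finset X) (u : X → Y) : ℤˣ := ∏ e ∈ s.sym2, pairSign u e

lemma pairSign_mk (u : X → Y) (x y : X) :
    pairSign u s(x, y) = if x < y ∧ u y < u x ∨ y < x ∧ u x < u y then -1 else 1 := rfl

lemma pairSign_comp (u : X ↪ Y) {t : Y → Z} (ht : t.Injective) (e : Sym2 X) :
    pairSign (t ∘ u) e = pairSign t (e.map u) * pairSign u e := by
  induction e with | h x y => ?_
  rcases eq_or_ne x y with rfl | hxy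
  · simp [pairSign_mk]
  have hu : u x ≠ u y := u.injective.ne hxy
  have htu : t (u x) ≠ t (u y) := ht.ne hu
  rcases hxy.lt_or_gt with hxy | hxy <;> rcases hu.lt_or_gt with hu | hu <;>
    rcases htu.lt_or_gt with htu | htu <;>
    simp [pairSign_mk, hxy, hxy.not_gt, hu, hu.not_gt, htu, htu.not_gt]

lemma inversionSign_comp (s : Finset X) (u : X ↪ Y) {t : Y → Z} (ht : t.Injective) :
    inversionSign s (t ∘ u) = inversionSign (s.map u) t * inversionSign s u := by
  simp only [inversionSign, pairSign_comp u ht, Finset.prod_mul_distrib, Finset.sym2_map,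
    Finset.prod_map, Function.Embedding.sym2Map_apply]

lemma inversionSign_of_strictMono (s : Finset X) {u : X → Y} (hu : StrictMono u) :
    inversionSign s u = 1 := by
  refine Finset.prod_eq_one fun e _ => ?_
  induction e with | h x y => ?_
  simp only [pairSign_mk, hu.lt_iff_lt]
  exact if_neg fun h => h.elim (fun h => h.1.asymm h.2) fun h => h.1.asymm h.2

lemma inversionSign_cons {s : Finset X} {x : X} (hx : x ∉ s) (u : X → Y) :
    inversionSign (s.cons x hx) u = (∏ y ∈ s, pairSign u s(x, y)) * inversionSign s u := by
  have hdiag : pairSign u s(x, x) = 1 := by simp [pairSign_mk]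
  simp only [inversionSign, Finset.sym2_cons, Finset.prod_disjUnion, Finset.prod_map,
    Finset.prod_cons, Sym2.mkEmbedding_apply, hdiag, one_mul]

lemma inversionSign_eq_prod_prod_filter_lt (s : Finset X) (u : X → Y) :
    inversionSign s u = ∏ y ∈ s, ∏ x ∈ s with x < y, if u y < u x then -1 else 1 := by
  induction s using Finset.induction_on_max with
  | empty => rfl
  | insert m s hm ih =>
    have hms : m ∉ s := fun h => (hm m h).false
    have hfilter_m : (insert m s).filter (· < m) = s := by
      rw [Finset.filter_insert, if_neg (lt_irrefl m), Finset.filter_true_of_mem hm]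
    have hfilter {y} (hy : y ∈ s) : (insert m s).filter (· < y) = s.filter (· < y) := by
      rw [Finset.filter_insert, if_neg (hm y hy).not_gt]
    rw [← Finset.cons_eq_insert m s hms, inversionSign_cons, ih, Finset.cons_eq_insert,
      Finset.prod_insert hms, hfilter_m]
    congr 1
    · refine Finset.prod_congr rfl fun y hy => ?_
      simp [pairSign_mk, hm y hy, (hm y hy).not_gt]
    · exact Finset.prod_congr rfl fun y hy => by rw [hfilter hy]

lemma inversionSign_univ_fin {m : ℕ} (σ : Perm (Fin m)) :
    inversionSign Finset.univ σ = Perm.sign σ := by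
  rw [inversionSign_eq_prod_prod_filter_lt, Perm.sign_eq_prod_prod_Iio]
  refine Finset.prod_congr rfl fun y _ => ?_
  rw [Finset.filter_gt_eq_Iio]
  refine Finset.prod_congr rfl fun x hx => ?_
  have hne : σ x ≠ σ y := σ.injective.ne (Finset.mem_Iio.1 hx).ne
  rcases hne.lt_or_gt with h | h <;> simp [h, h.not_gt]

lemma inversionSign_eq_sign_subtypePerm (s : Finset X) (σ : Perm X) (hσ : ∀ x, σ x ∈ s ↔ x ∈ s) :
    inversionSign s σ = Perm.sign (σ.subtypePerm hσ) := by
  let e : Fin s.card ≃o s := s.orderIsoOfFin rfl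
  let τ : Perm (Fin s.card) := e.toEquiv.symm.permCongr (σ.subtypePerm hσ)
  let ι : Fin s.card ↪o X := s.orderEmbOfFin rfl
  have hs : Finset.univ.map ι.toEmbedding = s := s.map_orderEmbOfFin_univ rfl
  have hcomm : σ ∘ ι = ι ∘ τ := by
    funext i
    have : e (τ i) = σ.subtypePerm hσ (e i) := e.toEquiv.apply_symm_apply _
    simpa [ι, e, Subtype.ext_iff] using this.symm
  calc inversionSign s σ
      = inversionSign (Finset.univ.map ι.toEmbedding) σ * inversionSign Finset.univ ι := by
        rw [hs, inversionSign_of_strictMono _ ι.strictMono, mul_one]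
    _ = inversionSign Finset.univ (ι ∘ τ) := by
        rw [← hcomm]
        exact (inversionSign_comp _ ι.toEmbedding σ.injective).symm
    _ = inversionSign Finset.univ τ := by
        rw [← Equiv.coe_toEmbedding τ, inversionSign_comp _ _ ι.injective,
          inversionSign_of_strictMono _ ι.strictMono, one_mul]
    _ = Perm.sign (σ.subtypePerm hσ) := by
        rw [inversionSign_univ_fin, Perm.sign_permCongr]

/-- The Koszul sign `(-1)^m` of `x`, where `m` is the number of elements of `s` to the left
of `x`. -/
def koszulSign (s : Finset X) (x : X) : ℤˣ := ∏ y ∈ s, if y < x then -1 else 1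

lemma koszulSign_cons_self {s : Finset X} {x : X} (hx : x ∉ s) :
    koszulSign (s.cons x hx) x = koszulSign s x := by
  simp [koszulSign]

lemma koszulSign_mul_prod_pairSign {s : Finset X} {x : X} (hx : x ∉ s) (u : X ↪ Y) :
    koszulSign s x * ∏ y ∈ s, pairSign u s(x, y) = koszulSign (s.map u) (u x) := by
  simp only [koszulSign, ← Finset.prod_mul_distrib, Finset.prod_map]
  refine Finset.prod_congr rfl fun y hy => ?_
  have hxy : x ≠ y := fun h => hx (h ▸ hy)
  rcases hxy.lt_or_gt with hlt | hlt <;> rcases (u.injective.ne hxy).lt_or_gt with hu | hu <;>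
    simp [pairSign_mk, hlt, hlt.not_gt, hu, hu.not_gt]

lemma koszulSign_mul_inversionSign_symmDiff (s : Finset X) (x : X) (u : X ↪ Y) :
    koszulSign s x * inversionSign (symmDiff s {x}) u
      = inversionSign s u * koszulSign (s.map u) (u x) := by
  by_cases hx : x ∈ s
  · obtain ⟨t, hxt, rfl⟩ : ∃ t, ∃ hxt : x ∉ t, s = t.cons x hxt :=
      ⟨s.erase x, s.notMem_erase x, by simp [hx]⟩
    have ht : symmDiff (t.cons x hxt) {x} = t := by
      ext y
      by_cases hy : y = x <;> simp [Finset.mem_symmDiff, hy, hxt]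
    rw [ht, inversionSign_cons, koszulSign_cons_self, Finset.map_cons, koszulSign_cons_self,
      ← koszulSign_mul_prod_pairSign hxt]
    generalize ∏ y ∈ t, pairSign u s(x, y) = q
    rw [mul_comm q, mul_mul_mul_comm, Int.units_mul_self, mul_one, mul_comm]
  · have ht : symmDiff s {x} = s.cons x hx := by
      ext y
      by_cases hy : y = x <;> simp [Finset.mem_symmDiff, hy, hx]
    rw [ht, inversionSign_cons, ← koszulSign_mul_prod_pairSign hx, ← mul_assoc, mul_comm]

lemma koszulSign_symmDiff (s : Finset X) (x y : X) :
    koszulSign (symmDiff s {x}) y = koszulSign s y * if x < y then -1 else 1 := by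
  by_cases hx : x ∈ s
  · have h : symmDiff s {x} = s.erase x := by
      ext z
      by_cases hz : z = x <;> simp [Finset.mem_symmDiff, hz, hx]
    rw [h, koszulSign, koszulSign, ← Finset.prod_erase_mul _ _ hx, mul_assoc, Int.units_mul_self,
      mul_one]
  · have h : symmDiff s {x} = s.cons x hx := by
      ext z
      by_cases hz : z = x <;> simp [Finset.mem_symmDiff, hz, hx]
    rw [h, koszulSign, Finset.prod_cons, mul_comm, koszulSign]

lemma koszulSign_mul_koszulSign_symmDiff_self (s : Finset X) (x : X) :
    koszulSign s x * koszulSign (symmDiff s {x}) x = 1 := by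
  rw [koszulSign_symmDiff, if_neg (lt_irrefl x), mul_one, Int.units_mul_self]

lemma koszulSign_mul_koszulSign_symmDiff_anticomm (s : Finset X) {x y : X} (hxy : x ≠ y) :
    koszulSign s x * koszulSign (symmDiff s {x}) y
      = -(koszulSign s y * koszulSign (symmDiff s {y}) x) := by
  rw [koszulSign_symmDiff, koszulSign_symmDiff]
  rcases hxy.lt_or_gt with h | h <;> simp [h, h.not_gt, mul_comm]

end InversionSign

section SignRestrict

open Equiv (Perm)

lemma ofSubtype_subtypePerm_apply {X : Type*} (σ : Perm X) {P : X → Prop} [DecidablePred P]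
    (hP : ∀ x, P (σ x) ↔ P x) (x : X) :
    Perm.ofSubtype (σ.subtypePerm hP) x = if P x then σ x else x := by
  split_ifs with hx
  · exact Perm.ofSubtype_apply_of_mem _ hx
  · exact Perm.ofSubtype_apply_of_not_mem _ hx

variable {X ι : Type*} [Fintype X] [DecidableEq X] [DecidableEq ι]

lemma sign_subtypePerm_or (σ : Perm X) {P Q : X → Prop} [DecidablePred P] [DecidablePred Q]
    (hP : ∀ x, P (σ x) ↔ P x) (hQ : ∀ x, Q (σ x) ↔ Q x) (hPQ : ∀ x, P x → ¬ Q x) :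
    Perm.sign (σ.subtypePerm (p := fun x => P x ∨ Q x) fun x => or_congr (hP x) (hQ x))
      = Perm.sign (σ.subtypePerm hP) * Perm.sign (σ.subtypePerm hQ) := by
  rw [← Perm.sign_ofSubtype, ← Perm.sign_ofSubtype (σ.subtypePerm hP),
    ← Perm.sign_ofSubtype (σ.subtypePerm hQ), ← map_mul]
  congr 1
  ext x
  simp only [Perm.mul_apply, ofSubtype_subtypePerm_apply]
  by_cases hQx : Q x
  · simp [hQx, hP, show ¬ P x from fun hPx => hPQ x hPx hQx]
  · simp [hQx]

lemma prod_sign_subtypePerm_fiber (σ : Perm X) (g : X → ι) (hσ : ∀ x, g (σ x) = g x)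
    (T : Finset ι) :
    ∏ j ∈ T, Perm.sign (σ.subtypePerm (p := fun x => g x = j) fun x => by rw [hσ])
      = Perm.sign (σ.subtypePerm (p := fun x => g x ∈ T) fun x => by rw [hσ]) := by
  induction T using Finset.induction_on with
  | empty =>
    have : IsEmpty {x // g x ∈ (∅ : Finset ι)} := ⟨fun x => Finset.notMem_empty _ x.2⟩
    rw [Finset.prod_empty, Subsingleton.elim (σ.subtypePerm _) 1, Perm.sign_one]
  | insert j T hj ih =>
    rw [Finset.prod_insert hj, ih, ← sign_subtypePerm_or]
    · exact Perm.sign_eq_sign_of_equiv _ _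
        (Equiv.subtypeEquivRight fun x => by simp) fun _ => rfl
    · rintro x rfl; exact hj

end SignRestrict

section Colouring

open Equiv (Perm)

variable {X A B : Type*}

section Fintype

variable [Fintype X]

/-- The positions at which the colouring `f` takes an odd colour; `A` is the set of even colours
and `B` the set of odd ones. -/
def oddPositions (f : X → A ⊕ B) : Finset X := Finset.univ.filter fun x => (f x).isRight

lemma mem_oddPositions {f : X → A ⊕ B} {x : X} : x ∈ oddPositions f ↔ (f x).isRight := by
  simp [oddPositions]

lemma oddPositions_comp_inv (f : X → A ⊕ B) (u : Perm X) :
    oddPositions (f ∘ ⇑u⁻¹) = (oddPositions f).map u.toEmbedding := by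
  ext x
  simp [mem_oddPositions, Finset.mem_map_equiv]

variable [DecidableEq A] [DecidableEq B]

/-- The weight of a colouring: how often each colour occurs. -/
def colourWeight (f : X → A ⊕ B) (c : A ⊕ B) : ℕ := (Finset.univ.filter fun x => f x = c).card

lemma colourWeight_comp_perm (f : X → A ⊕ B) (u : Perm X) :
    colourWeight (f ∘ u) = colourWeight f := by
  ext c
  exact Finset.card_equiv u (by simp)

/-- The set of positions coloured `inl a` or `inr b`. -/
def flippable (a : A) (b : B) (f : X → A ⊕ B) : Finset X :=
  Finset.univ.filter fun x => f x = .inl a ∨ f x = .inr b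

variable {a : A} {b : B}

lemma mem_flippable {f : X → A ⊕ B} {x : X} :
    x ∈ flippable a b f ↔ f x = .inl a ∨ f x = .inr b := by
  simp [flippable]

lemma flippable_comp_inv (f : X → A ⊕ B) (u : Perm X) :
    flippable a b (f ∘ ⇑u⁻¹) = (flippable a b f).map u.toEmbedding := by
  ext x
  simp [mem_flippable, Finset.mem_map_equiv]

lemma card_flippable (f : X → A ⊕ B) :
    (flippable a b f).card = colourWeight f (.inl a) + colourWeight f (.inr b) := by
  classical
  rw [flippable, Finset.filter_or, Finset.card_union_of_disjoint]
  · rfl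
  · exact Finset.disjoint_filter.2 fun x _ ha hb => by simp [ha] at hb

end Fintype

section Flip

variable [DecidableEq X] [DecidableEq A] [DecidableEq B]

/-- Change the colour at position `x` from `inl a` to `inr b` or vice versa. -/
def flipColour (a : A) (b : B) (f : X → A ⊕ B) (x : X) : X → A ⊕ B :=
  Function.update f x (Equiv.swap (.inl a) (.inr b) (f x))

variable {a : A} {b : B}

lemma flipColour_flipColour_self (f : X → A ⊕ B) (x : X) :
    flipColour a b (flipColour a b f x) x = f := by
  simp [flipColour]

lemma flipColour_flipColour_comm (f : X → A ⊕ B) {x y : X} (hxy : x ≠ y) :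
    flipColour a b (flipColour a b f x) y = flipColour a b (flipColour a b f y) x := by
  simp only [flipColour, Function.update_of_ne hxy, Function.update_of_ne hxy.symm]
  exact Function.update_comm hxy _ _ _

lemma flipColour_comp_inv (f : X → A ⊕ B) (x : X) (u : Perm X) :
    flipColour a b (f ∘ ⇑u⁻¹) (u x) = flipColour a b f x ∘ ⇑u⁻¹ := by
  ext1 y
  by_cases hy : y = u x
  · simp [flipColour, hy]
  · have : u.symm y ≠ x := fun h => hy (by simp [← h])
    simp [flipColour, hy, this]

variable [Fintype X]

lemma flippable_flipColour (f : X → A ⊕ B) (x : X) :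
    flippable a b (flipColour a b f x) = flippable a b f := by
  ext y
  rcases eq_or_ne y x with rfl | hy
  · simp [mem_flippable, flipColour, Equiv.swap_apply_eq_iff, or_comm]
  · simp [mem_flippable, flipColour, hy]

lemma oddPositions_flipColour {f : X → A ⊕ B} {x : X} (hx : x ∈ flippable a b f) :
    oddPositions (flipColour a b f x) = symmDiff (oddPositions f) {x} := by
  ext y
  rcases eq_or_ne y x with rfl | hy
  · rcases mem_flippable.1 hx with h | h <;>
      simp [mem_oddPositions, Finset.mem_symmDiff, flipColour, h]
  · simp [mem_oddPositions, Finset.mem_symmDiff, flipColour, hy]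

lemma colourWeight_flipColour_of_ne (f : X → A ⊕ B) (x : X) {c : A ⊕ B}
    (ha : c ≠ .inl a) (hb : c ≠ .inr b) :
    colourWeight (flipColour a b f x) c = colourWeight f c := by
  refine congrArg Finset.card (Finset.filter_congr fun y _ => ?_)
  rcases eq_or_ne y x with rfl | hy
  · simp [flipColour, Equiv.swap_apply_eq_iff, Equiv.swap_apply_of_ne_of_ne ha hb]
  · simp [flipColour, hy]

lemma neg_one_pow_colourWeight_flipColour {f : X → A ⊕ B} {x : X} (hx : x ∈ flippable a b f) :
    (-1 : ℤˣ) ^ colourWeight (flipColour a b f x) (.inl a)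
      = -(-1) ^ colourWeight f (.inl a) := by
  have parity (g : X → A ⊕ B) : (-1 : ℤˣ) ^ colourWeight g (.inl a)
      = ∏ y, if g y = .inl a then -1 else 1 := by
    rw [Finset.prod_ite, Finset.prod_const_one, mul_one, Finset.prod_const, colourWeight]
  rw [parity, parity, ← Finset.mul_prod_erase _ _ (Finset.mem_univ x),
    ← Finset.mul_prod_erase _ _ (Finset.mem_univ x), ← neg_mul]
  congr 1
  · rcases mem_flippable.1 hx with h | h <;> simp [flipColour, h]
  · exact Finset.prod_congr rfl fun y hy => by simp [flipColour, Finset.ne_of_mem_erase hy]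

end Flip

end Colouring

section SuperTensor

open Equiv (Perm)

variable {X A B : Type*} [LinearOrder X] [Fintype X]

lemma inversionSign_oddPositions_mul (f : X → A ⊕ B) (t u : Perm X) :
    inversionSign (oddPositions f) ⇑(t * u)
      = inversionSign (oddPositions (f ∘ ⇑u⁻¹)) t * inversionSign (oddPositions f) u := by
  rw [oddPositions_comp_inv, Perm.coe_mul]
  exact inversionSign_comp _ u.toEmbedding t.injective

variable (k : Type*) [CommRing k]

variable (X A B) in
/-- The super tensor power `V^{⊗ X}` of the super space `V` with even basis `A` and odd basis `B`:
the free module on the colourings `X → A ⊕ B`. -/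
def SuperTensorPower : Type _ := (X → A ⊕ B) →₀ k

instance : AddCommGroup (SuperTensorPower X A B k) :=
  inferInstanceAs (AddCommGroup ((X → A ⊕ B) →₀ k))

instance : Module k (SuperTensorPower X A B k) :=
  inferInstanceAs (Module k ((X → A ⊕ B) →₀ k))

/-- The basis of the super tensor power given by the colourings. -/
def colouringBasis : Module.Basis (X → A ⊕ B) k (SuperTensorPower X A B k) :=
  .ofRepr (.refl k _)

variable (X A B) in
/-- The action of the symmetric group on the super tensor power, which permutes the colourings up to
the sign coming from the transpositions of odd factors. -/
def superTensor : Representation k (Perm X) (SuperTensorPower X A B k) where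
  toFun u := (colouringBasis k).constr k fun f =>
    inversionSign (oddPositions f) u • colouringBasis k (f ∘ ⇑u⁻¹)
  map_one' := (colouringBasis k).ext fun f => by
    have h : inversionSign (oddPositions f) id = 1 :=
      inversionSign_of_strictMono _ strictMono_id
    simp [h]
  map_mul' t u := (colouringBasis k).ext fun f => by
    simp only [Module.Basis.constr_basis, Module.End.mul_apply, LinearMap.map_smul_of_tower,
      smul_smul, inversionSign_oddPositions_mul, mul_inv_rev, Function.comp_assoc, mul_comm]
    rfl

lemma superTensor_colouringBasis (u : Perm X) (f : X → A ⊕ B) :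
    superTensor X A B k u (colouringBasis k f)
      = inversionSign (oddPositions f) u • colouringBasis k (f ∘ ⇑u⁻¹) :=
  (colouringBasis k).constr_basis k _ f

variable [DecidableEq A] [DecidableEq B]

variable (X) in
/-- The span of the colourings whose weight lies in `W`, a sum of weight spaces of the super tensor
power. -/
def weightSpace (W : Set (A ⊕ B → ℕ)) :
    Submodule (MonoidAlgebra k (Perm X)) (superTensor X A B k).asModule :=
  Subrepresentation.asSubmodule
    { toSubmodule := Submodule.span k (colouringBasis k '' {f | colourWeight f ∈ W})
      apply_mem_toSubmodule u v hv := by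
        refine Submodule.span_le (p := (Submodule.span k _).comap (superTensor X A B k u)) |>.2
          ?_ hv
        rintro _ ⟨f, hf, rfl⟩
        simp only [Submodule.comap_coe, Set.mem_preimage, superTensor_colouringBasis]
        refine Submodule.smul_of_tower_mem _ _ (Submodule.subset_span ⟨_, ?_, rfl⟩)
        rwa [Set.mem_ofPred_eq, colourWeight_comp_perm] }

variable {k}

lemma mem_weightSpace_iff_mem_span {W : Set (A ⊕ B → ℕ)} {v : SuperTensorPower X A B k} :
    v ∈ weightSpace X k W
      ↔ v ∈ Submodule.span k (colouringBasis k '' {f | colourWeight f ∈ W}) :=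
  Iff.rfl

lemma colouringBasis_mem_weightSpace {W : Set (A ⊕ B → ℕ)} {f : X → A ⊕ B}
    (hf : colourWeight f ∈ W) : colouringBasis k f ∈ weightSpace X k W :=
  mem_weightSpace_iff_mem_span.2 (Submodule.subset_span ⟨f, hf, rfl⟩)

end SuperTensor

section KoszulOperator

variable {X A B k : Type*} [LinearOrder X] [Fintype X] [CommRing k] [DecidableEq A] [DecidableEq B]

open Equiv (Perm)

variable (k) in
/-- The odd operator `E_{ab} + E_{ba}` on the super tensor power, acting as a derivation:
each position coloured `a` or `b` is recoloured in turn. -/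
def koszulOperator (a : A) (b : B) : SuperTensorPower X A B k →ₗ[k] SuperTensorPower X A B k :=
  (colouringBasis k).constr k fun f => ∑ x ∈ flippable a b f,
    koszulSign (oddPositions f) x • colouringBasis k (flipColour a b f x)

variable {a : A} {b : B}

lemma koszulOperator_colouringBasis (f : X → A ⊕ B) :
    koszulOperator k a b (colouringBasis k f) = ∑ x ∈ flippable a b f,
      koszulSign (oddPositions f) x • colouringBasis k (flipColour a b f x) := by
  simp only [koszulOperator, Module.Basis.constr_basis]

lemma koszulOperator_comp_superTensor (u : Perm X) :
    koszulOperator k a b ∘ₗ superTensor X A B k u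
      = superTensor X A B k u ∘ₗ koszulOperator k a b := by
  refine (colouringBasis k).ext fun f => ?_
  simp only [LinearMap.comp_apply, superTensor_colouringBasis,
    koszulOperator_colouringBasis, LinearMap.map_smul_of_tower, map_sum, Finset.smul_sum, smul_smul,
    flippable_comp_inv, Finset.sum_map, Equiv.coe_toEmbedding, flipColour_comp_inv,
    oddPositions_comp_inv]
  refine Finset.sum_congr rfl fun x hx => ?_
  rw [oddPositions_flipColour hx]
  exact congrArg (· • _) (koszulSign_mul_inversionSign_symmDiff _ x u.toEmbedding).symm

lemma koszulOperator_koszulOperator_colouringBasis (f : X → A ⊕ B) :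
    koszulOperator k a b (koszulOperator k a b (colouringBasis k f))
      = (flippable a b f).card • colouringBasis k f := by
  let F (q : X × X) : SuperTensorPower X A B k :=
    (koszulSign (oddPositions f) q.1 * koszulSign (symmDiff (oddPositions f) {q.1}) q.2) •
      colouringBasis k (flipColour a b (flipColour a b f q.1) q.2)
  have hF : koszulOperator k a b (koszulOperator k a b (colouringBasis k f))
      = ∑ q ∈ flippable a b f ×ˢ flippable a b f, F q := by
    simp only [koszulOperator_colouringBasis, map_sum, LinearMap.map_smul_of_tower, Finset.smul_sum,
      smul_smul, flippable_flipColour, Finset.sum_product, F]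
    exact Finset.sum_congr rfl fun x hx => by rw [oddPositions_flipColour hx]
  have hdiag : ∑ q ∈ (flippable a b f).diag, F q = (flippable a b f).card • colouringBasis k f := by
    simp [F, Finset.sum_diag, koszulSign_mul_koszulSign_symmDiff_self, flipColour_flipColour_self]
  have hoff : ∑ q ∈ (flippable a b f).offDiag, F q = 0 := by
    refine Finset.sum_involution (fun q _ => q.swap) (fun q hq => ?_) (fun q hq _ h => ?_)
      (fun q hq => ?_) fun q _ => Prod.swap_swap q
    · have hne : q.1 ≠ q.2 := (Finset.mem_offDiag.1 hq).2.2
      simp only [F, Prod.fst_swap, Prod.snd_swap]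
      rw [koszulSign_mul_koszulSign_symmDiff_anticomm _ hne, flipColour_flipColour_comm f hne,
        Units.neg_smul, neg_add_cancel]
    · exact (Finset.mem_offDiag.1 hq).2.2 (congrArg Prod.snd h)
    · simpa [and_assoc, and_comm, eq_comm, and_left_comm] using hq
  rw [hF, ← Finset.diag_union_offDiag, Finset.sum_union (Finset.disjoint_diag_offDiag _), hdiag,
    hoff, add_zero]

lemma koszulOperator_koszulOperator_of_mem_weightSpace {W : Set (A ⊕ B → ℕ)} {m : ℕ}
    (hW : ∀ w ∈ W, w (.inl a) + w (.inr b) = m) {v : SuperTensorPower X A B k}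
    (hv : v ∈ weightSpace X k W) :
    koszulOperator k a b (koszulOperator k a b v) = (m : k) • v := by
  have h : Set.EqOn (koszulOperator k a b ∘ₗ koszulOperator k a b)
      ((m : k) • LinearMap.id : SuperTensorPower X A B k →ₗ[k] _)
      (colouringBasis k '' {f | colourWeight f ∈ W}) := by
    rintro _ ⟨f, hf, rfl⟩
    simp only [LinearMap.comp_apply, koszulOperator_koszulOperator_colouringBasis, card_flippable,
      hW _ hf, LinearMap.smul_apply, LinearMap.id_apply, Nat.cast_smul_eq_nsmul]
  simpa only [LinearMap.comp_apply, LinearMap.smul_apply, LinearMap.id_apply]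
    using LinearMap.eqOn_span h (mem_weightSpace_iff_mem_span.1 hv)

variable (a b) in
/-- The weights agreeing with `γ` away from the colours `a` and `b`, in which `a` and `b` together
occur `m` times and the multiplicity of `a` has sign `ε`. -/
def parityWeights (γ : A ⊕ B → ℕ) (m : ℕ) (ε : ℤˣ) : Set (A ⊕ B → ℕ) :=
  {w | (∀ c, c ≠ .inl a → c ≠ .inr b → w c = γ c) ∧ w (.inl a) + w (.inr b) = m ∧
    (-1) ^ w (.inl a) = ε}

lemma colourWeight_flipColour_mem_parityWeights {γ : A ⊕ B → ℕ} {m : ℕ} {ε : ℤˣ} {f : X → A ⊕ B}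
    (hf : colourWeight f ∈ parityWeights a b γ m ε) {x : X} (hx : x ∈ flippable a b f) :
    colourWeight (flipColour a b f x) ∈ parityWeights a b γ m (-ε) := by
  obtain ⟨hγ, hm, hε⟩ := hf
  refine ⟨fun c ha hb => ?_, ?_, ?_⟩
  · rw [colourWeight_flipColour_of_ne f x ha hb, hγ c ha hb]
  · rw [← card_flippable, flippable_flipColour, card_flippable, hm]
  · rw [neg_one_pow_colourWeight_flipColour hx, hε]

lemma koszulOperator_mem_weightSpace_parityWeights {γ : A ⊕ B → ℕ} {m : ℕ} {ε : ℤˣ}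
    {v : SuperTensorPower X A B k} (hv : v ∈ weightSpace X k (parityWeights a b γ m ε)) :
    koszulOperator k a b v ∈ weightSpace X k (parityWeights a b γ m (-ε)) := by
  refine (Submodule.span_le (p := (Submodule.span k _).comap (koszulOperator k a b))).2 ?_
    (mem_weightSpace_iff_mem_span.1 hv)
  rintro _ ⟨f, hf, rfl⟩
  rw [SetLike.mem_coe, Submodule.mem_comap, koszulOperator_colouringBasis]
  exact Submodule.sum_mem _ fun x hx => Submodule.smul_of_tower_mem _ _
    (colouringBasis_mem_weightSpace (colourWeight_flipColour_mem_parityWeights hf hx))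

lemma nonempty_linearEquiv_of_apply_apply_eq_smul {R M : Type*} [Semiring R]
    [AddCommMonoid M] [Module R M] {N N' : Submodule R M} (φ : M →ₗ[R] M) (c : Rˣ)
    (hN : ∀ v ∈ N, φ v ∈ N') (hN' : ∀ v ∈ N', φ v ∈ N)
    (hφ : ∀ v ∈ N, φ (φ v) = c • v) (hφ' : ∀ v ∈ N', φ (φ v) = c • v) :
    Nonempty (N ≃ₗ[R] N') := by
  refine ⟨.ofBijective (φ.restrict hN) ⟨?_, fun w => ?_⟩⟩
  · intro v w hvw
    have hvw : φ v = φ w := congrArg Subtype.val hvw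
    exact Subtype.ext (smul_left_cancel c (by rw [← hφ v v.2, ← hφ w w.2, hvw]))
  · have hw : c⁻¹ • (w : M) ∈ N' := N'.smul_mem _ w.2
    exact ⟨⟨_, hN' _ hw⟩, Subtype.ext ((hφ' _ hw).trans (smul_inv_smul c _))⟩

theorem nonempty_weightSpace_parityWeights_linearEquiv (γ : A ⊕ B → ℕ) {m : ℕ}
    (hm : IsUnit (m : k)) (ε : ℤˣ) :
    Nonempty (weightSpace X k (parityWeights a b γ m ε)
      ≃ₗ[MonoidAlgebra k (Perm X)] weightSpace X k (parityWeights a b γ m (-ε))) := by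
  obtain ⟨c, hc⟩ : IsUnit (m : MonoidAlgebra k (Perm X)) := by
    simpa using hm.map (algebraMap k (MonoidAlgebra k (Perm X)))
  let D : (superTensor X A B k).asModule →ₗ[MonoidAlgebra k (Perm X)]
      (superTensor X A B k).asModule :=
    Representation.IntertwiningMap.equivLinearMapAsModule _ _
      ⟨koszulOperator k a b, koszulOperator_comp_superTensor⟩
  have hD (ε' : ℤˣ) (v) (hv : v ∈ weightSpace X k (parityWeights a b γ m ε')) :
      D v ∈ weightSpace X k (parityWeights a b γ m (-ε')) :=
    koszulOperator_mem_weightSpace_parityWeights hv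
  have hsq (ε' : ℤˣ) (v) (hv : v ∈ weightSpace X k (parityWeights a b γ m ε')) :
      D (D v) = c • v := by
    rw [Units.smul_def, hc, Nat.cast_smul_eq_nsmul, ← Nat.cast_smul_eq_nsmul k]
    exact koszulOperator_koszulOperator_of_mem_weightSpace (fun w hw => hw.2.1) hv
  exact nonempty_linearEquiv_of_apply_apply_eq_smul D c (hD ε)
    (by simpa only [neg_neg] using hD (-ε)) (hsq ε) (hsq (-ε))

end KoszulOperator

section SignedPermutationModule

open Equiv (Perm)

variable {X A B : Type*}

lemma exists_eq_comp_inv_of_colourWeight_eq [Fintype X] [DecidableEq A] [DecidableEq B]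
    {f g : X → A ⊕ B} (h : colourWeight g = colourWeight f) : ∃ u : Perm X, g = f ∘ ⇑u⁻¹ := by
  have fiber (c : A ⊕ B) : Nonempty ({x // f x = c} ≃ {x // g x = c}) := by
    refine ⟨Fintype.equivOfCardEq ?_⟩
    rw [Fintype.card_subtype, Fintype.card_subtype]
    exact (congrFun h c).symm
  let u : Perm X := Equiv.ofFiberEquiv fun c => (fiber c).some
  have hu (x : X) : g (u x) = f x := Equiv.ofFiberEquiv_map _ x
  exact ⟨u, funext fun x => by simpa using hu (u⁻¹ x)⟩

variable (k : Type*) [CommRing k] [LinearOrder X] [Fintype X]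

/-- The relations `σ = ± 1` in the group algebra of the symmetric group, for `σ` in the stabilizer
of the colouring `f`, where the sign is that of `σ` on the odd positions. -/
def stabilizerRelations (f : X → A ⊕ B) :
    Submodule (MonoidAlgebra k (Perm X)) (MonoidAlgebra k (Perm X)) :=
  Submodule.span _ {r | ∃ σ : Perm X, f ∘ σ = f ∧ r = MonoidAlgebra.single σ 1
    - MonoidAlgebra.single 1 ((inversionSign (oddPositions f) σ : ℤ) : k)}

/-- The orbit map `r ↦ r • f` of a colouring `f`. -/
def orbitMap (f : X → A ⊕ B) :
    MonoidAlgebra k (Perm X) →ₗ[MonoidAlgebra k (Perm X)] (superTensor X A B k).asModule :=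
  LinearMap.toSpanSingleton _ _ (colouringBasis k f)

lemma orbitMap_single (f : X → A ⊕ B) (u : Perm X) (r : k) :
    orbitMap k f (MonoidAlgebra.single u r)
      = r • inversionSign (oddPositions f) u • colouringBasis k (f ∘ ⇑u⁻¹) := by
  rw [← superTensor_colouringBasis]
  exact Representation.single_smul _ _ _ _

lemma range_orbitMap [DecidableEq A] [DecidableEq B] (f : X → A ⊕ B) :
    LinearMap.range (orbitMap k f) = weightSpace X k {colourWeight f} := by
  refine le_antisymm ?_ fun v hv => ?_
  · rintro _ ⟨r, rfl⟩
    exact Submodule.smul_mem _ r (colouringBasis_mem_weightSpace (Set.mem_singleton _))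
  · refine (Submodule.span_le (p := (LinearMap.range (orbitMap k f)).restrictScalars k)).2 ?_
      (mem_weightSpace_iff_mem_span.1 hv)
    rintro _ ⟨g, hg, rfl⟩
    obtain ⟨u, rfl⟩ := exists_eq_comp_inv_of_colourWeight_eq (Set.mem_singleton_iff.1 hg)
    refine ⟨MonoidAlgebra.single u ((inversionSign (oddPositions f) u : ℤ) : k), ?_⟩
    rw [orbitMap_single, Int.cast_smul_eq_zsmul, ← Units.smul_def, smul_smul, Int.units_mul_self,
      one_smul]

lemma mk_single_mul_of_comp_eq {f : X → A ⊕ B} (u : Perm X) {σ : Perm X} (hσ : f ∘ σ = f) :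
    (stabilizerRelations k f).mkQ (MonoidAlgebra.single (u * σ) 1)
      = inversionSign (oddPositions f) σ •
        (stabilizerRelations k f).mkQ (MonoidAlgebra.single u 1) := by
  have hrel := (stabilizerRelations k f).smul_mem (MonoidAlgebra.single u 1)
    (Submodule.subset_span ⟨σ, hσ, rfl⟩)
  rw [← sub_eq_zero, ← LinearMap.map_smul_of_tower, ← map_sub]
  refine (Submodule.Quotient.mk_eq_zero _).2 ?_
  convert hrel using 1
  rw [smul_sub, smul_eq_mul, smul_eq_mul, MonoidAlgebra.single_mul_single,
    MonoidAlgebra.single_mul_single, Units.smul_def, ← Int.cast_smul_eq_zsmul k,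
    MonoidAlgebra.smul_single, mul_one, mul_one, one_mul, smul_eq_mul, mul_one]

lemma signed_mk_single_eq_of_comp_inv_eq {f : X → A ⊕ B} {u v : Perm X}
    (huv : f ∘ ⇑u⁻¹ = f ∘ ⇑v⁻¹) :
    inversionSign (oddPositions f) u • (stabilizerRelations k f).mkQ (MonoidAlgebra.single u 1)
      = inversionSign (oddPositions f) v •
        (stabilizerRelations k f).mkQ (MonoidAlgebra.single v 1) := by
  obtain ⟨σ, rfl⟩ : ∃ σ, u = v * σ := ⟨v⁻¹ * u, (mul_inv_cancel_left _ _).symm⟩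
  have hσ : f ∘ σ = f := by
    funext x
    simpa using (congrFun huv (v (σ x))).symm
  have hσ' : f ∘ ⇑σ⁻¹ = f := by
    rw [← hσ, Function.comp_assoc, ← Perm.coe_mul, mul_inv_cancel, hσ]
    rfl
  rw [inversionSign_oddPositions_mul, hσ', mk_single_mul_of_comp_eq k v hσ, smul_smul, mul_assoc,
    Int.units_mul_self, mul_one]

open Classical in
/-- A section of the orbit map of `f` modulo the relations `stabilizerRelations k f`; it vanishes on
the colourings outside the orbit of `f`. -/
def orbitSection (f : X → A ⊕ B) :
    SuperTensorPower X A B k →ₗ[k] MonoidAlgebra k (Perm X) ⧸ stabilizerRelations k f :=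
  (colouringBasis k).constr k fun g =>
    if h : ∃ u : Perm X, f ∘ ⇑u⁻¹ = g then inversionSign (oddPositions f) h.choose •
      (stabilizerRelations k f).mkQ (MonoidAlgebra.single h.choose 1) else 0

lemma orbitSection_colouringBasis (f : X → A ⊕ B) (u : Perm X) :
    orbitSection k f (colouringBasis k (f ∘ ⇑u⁻¹)) = inversionSign (oddPositions f) u •
      (stabilizerRelations k f).mkQ (MonoidAlgebra.single u 1) := by
  have h : ∃ v : Perm X, f ∘ ⇑v⁻¹ = f ∘ ⇑u⁻¹ := ⟨u, rfl⟩
  rw [orbitSection, Module.Basis.constr_basis, dif_pos h]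
  exact signed_mk_single_eq_of_comp_inv_eq k h.choose_spec

lemma orbitSection_orbitMap (f : X → A ⊕ B) (r : MonoidAlgebra k (Perm X)) :
    orbitSection k f (orbitMap k f r) = (stabilizerRelations k f).mkQ r := by
  induction r using MonoidAlgebra.induction_linear with
  | zero => rw [map_zero, map_zero]; exact map_zero (orbitSection k f)
  | add x y hx hy => rw [map_add, map_add, ← hx, ← hy]; exact map_add (orbitSection k f) _ _
  | single u t =>
    rw [orbitMap_single, map_smul, LinearMap.map_smul_of_tower, orbitSection_colouringBasis,
      smul_smul, Int.units_mul_self, one_smul, ← LinearMap.map_smul_of_tower,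
      MonoidAlgebra.smul_single, smul_eq_mul, mul_one]

lemma ker_orbitMap (f : X → A ⊕ B) :
    LinearMap.ker (orbitMap k f) = stabilizerRelations k f := by
  refine le_antisymm (fun r hr => ?_) (Submodule.span_le.2 ?_)
  · rw [← (stabilizerRelations k f).ker_mkQ, LinearMap.mem_ker, ← orbitSection_orbitMap,
      LinearMap.mem_ker.1 hr]
    exact map_zero _
  · rintro _ ⟨σ, hσ, rfl⟩
    have hσ' : f ∘ ⇑σ⁻¹ = f := by
      nth_rw 1 [← hσ]
      simp [Function.comp_assoc]
    rw [SetLike.mem_coe, LinearMap.mem_ker, map_sub, orbitMap_single, orbitMap_single, hσ',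
      Int.cast_smul_eq_zsmul, ← Units.smul_def, smul_smul]
    have hone : inversionSign (oddPositions f) id = 1 :=
      inversionSign_of_strictMono _ strictMono_id
    rw [Perm.coe_one, hone, inv_one, Perm.coe_one, Function.comp_id, mul_one, one_smul]
    exact sub_self _

theorem nonempty_quotient_stabilizerRelations_linearEquiv [DecidableEq A] [DecidableEq B]
    (f : X → A ⊕ B) :
    Nonempty ((MonoidAlgebra k (Perm X) ⧸ stabilizerRelations k f)
      ≃ₗ[MonoidAlgebra k (Perm X)] weightSpace X k {colourWeight f}) :=
  ⟨(Submodule.quotEquivOfEq _ _ (ker_orbitMap k f).symm).trans <|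
    (orbitMap k f).quotKerEquivRange.trans (.ofEq _ _ (range_orbitMap k f))⟩

end SignedPermutationModule

section Block

open Equiv (Perm)

lemma blockIdx_cons (a : ℕ) (γ : List ℕ) (x : ℕ) :
    blockIdx (a :: γ) x = if x < a then 0 else blockIdx γ (x - a) + 1 := by
  have hsum (j : ℕ) : ((a :: γ).take (j.succ + 1)).sum = a + (γ.take (j + 1)).sum := by simp
  unfold blockIdx
  rw [List.length_cons, List.range_succ_eq_map, List.countP_cons, List.countP_map]
  rcases lt_or_ge x a with hxa | hxa
  · rw [if_pos hxa, if_neg (by simpa using hxa), add_zero, List.countP_eq_zero]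
    intro j _
    simp only [Function.comp_apply, hsum, decide_eq_true_eq]
    omega
  · rw [if_neg hxa.not_gt, if_pos (by simpa using hxa)]
    refine congrArg (· + 1) (List.countP_congr fun j _ => ?_)
    simp only [Function.comp_apply, hsum, decide_eq_true_eq]
    omega

lemma blockIdx_lt_length {γ : List ℕ} {x : ℕ} (hx : x < γ.sum) : blockIdx γ x < γ.length := by
  induction γ generalizing x with
  | nil => simp at hx
  | cons a γ ih =>
    rw [List.sum_cons] at hx
    rw [blockIdx_cons, List.length_cons]
    split_ifs with hxa
    · exact Nat.succ_pos _
    · exact Nat.succ_lt_succ (ih (by omega))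

lemma card_filter_blockIdx_eq (γ : List ℕ) (j : ℕ) :
    ((Finset.range γ.sum).filter fun x => blockIdx γ x = j).card = γ.getD j 0 := by
  rw [Finset.card_filter]
  induction γ generalizing j with
  | nil => simp
  | cons a γ ih =>
    have hfirst : ∑ x ∈ Finset.range a, (if blockIdx (a :: γ) x = j then 1 else 0)
        = ∑ x ∈ Finset.range a, if 0 = j then 1 else 0 :=
      Finset.sum_congr rfl fun x hx => by rw [blockIdx_cons, if_pos (Finset.mem_range.1 hx)]
    have hrest (x : ℕ) : blockIdx (a :: γ) (a + x) = blockIdx γ x + 1 := by simp [blockIdx_cons]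
    rw [List.sum_cons, Finset.sum_range_add, hfirst]
    simp only [hrest]
    cases j with
    | zero => simp
    | succ j => simpa using ih j

/-- The colour of the `j`-th block of `(α | β)`, where `a = ℓ(α)`: the blocks of `α` receive the
even colours `0, 1, …` and those of `β` the odd colours `0, 1, …`. -/
def blockColour (a j : ℕ) : ℕ ⊕ ℕ := if j < a then .inl j else .inr (j - a)

lemma blockColour_eq_inl {a j i : ℕ} : blockColour a j = .inl i ↔ j < a ∧ j = i := by
  unfold blockColour; split_ifs <;> simp [*]

lemma blockColour_eq_inr {a j i : ℕ} : blockColour a j = .inr i ↔ j = a + i := by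
  unfold blockColour; split_ifs <;> simp <;> omega

lemma isRight_blockColour {a j : ℕ} : (blockColour a j).isRight ↔ a ≤ j := by
  unfold blockColour; split_ifs <;> simp <;> omega

lemma blockColour_injective (a : ℕ) : (blockColour a).Injective := by
  intro i j h
  unfold blockColour at h
  split_ifs at h <;> simp at h <;> omega

/-- The colouring of the positions by the blocks of `(α | β)` containing them. -/
def blockColouring (n : ℕ) (α β : List ℕ) (x : Fin n) : ℕ ⊕ ℕ :=
  blockColour α.length (blockIdx (α ++ β) x)

/-- The weight in which the `i`-th even colour occurs `α_i` times and the `i`-th odd colour `β_i`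
times. -/
def partWeight (α β : List ℕ) : ℕ ⊕ ℕ → ℕ := Sum.elim (α.getD · 0) (β.getD · 0)

variable {n : ℕ} {α β : List ℕ}

lemma colourWeight_blockColouring (hn : (α ++ β).sum = n) :
    colourWeight (blockColouring n α β) = partWeight α β := by
  subst hn
  have hcard (j : ℕ) : (Finset.univ.filter
      fun x : Fin (α ++ β).sum => blockIdx (α ++ β) x = j).card = (α ++ β).getD j 0 := by
    rw [← card_filter_blockIdx_eq, Finset.card_filter, Finset.card_filter,
      ← Fin.sum_univ_eq_sum_range (fun x => if blockIdx (α ++ β) x = j then 1 else 0)]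
  funext c
  unfold colourWeight blockColouring partWeight
  rcases c with j | j
  · simp only [blockColour_eq_inl, Sum.elim_inl]
    rcases lt_or_ge j α.length with hj | hj
    · rw [← List.getD_append α β 0 j hj, ← hcard]
      exact congrArg Finset.card (Finset.filter_congr fun x _ => by omega)
    · rw [List.getD_eq_default _ _ hj, Finset.card_eq_zero, Finset.filter_eq_empty_iff]
      omega
  · simp only [blockColour_eq_inr, Sum.elim_inr, hcard]
    rw [List.getD_append_right _ _ _ _ (Nat.le_add_right _ _), Nat.add_sub_cancel_left]

lemma blockColouring_comp_eq_iff_mem_youngSubgroup {σ : Perm (Fin n)} :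
    blockColouring n α β ∘ σ = blockColouring n α β ↔ σ ∈ youngSubgroup n (α ++ β) := by
  simp only [funext_iff, Function.comp_apply, blockColouring, (blockColour_injective _).eq_iff]
  rfl

lemma mem_oddPositions_blockColouring (hn : (α ++ β).sum = n) (x : Fin n) :
    x ∈ oddPositions (blockColouring n α β)
      ↔ blockIdx (α ++ β) x ∈ Finset.Ico α.length (α.length + β.length) := by
  have hx : blockIdx (α ++ β) x < α.length + β.length :=
    List.length_append ▸ blockIdx_lt_length (hn.symm ▸ x.2)
  rw [mem_oddPositions, blockColouring, isRight_blockColour, Finset.mem_Ico]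
  exact (and_iff_left hx).symm

variable (k : Type*) [Field k]

lemma chiHom_apply_eq_inversionSign (hn : (α ++ β).sum = n) (σ : youngSubgroup n (α ++ β)) :
    chiHom k n α β σ = ((inversionSign (oddPositions (blockColouring n α β)) σ.1 : ℤ) : k) := by
  have hodd (x : Fin n) : (σ : Perm (Fin n)) x ∈ oddPositions (blockColouring n α β)
      ↔ x ∈ oddPositions (blockColouring n α β) := by
    simp only [mem_oddPositions_blockColouring hn, youngSubgroup_mem σ x]
  have hsign : ∏ j ∈ Finset.Ico α.length (α.length + β.length),
        Perm.sign (blockRestrict n (α ++ β) j σ)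
      = inversionSign (oddPositions (blockColouring n α β)) σ.1 := by
    rw [inversionSign_eq_sign_subtypePerm _ _ hodd]
    refine (prod_sign_subtypePerm_fiber (σ : Perm (Fin n)) (fun x : Fin n => blockIdx (α ++ β) x)
      (youngSubgroup_mem σ) _).trans ?_
    exact Perm.sign_eq_sign_of_equiv _ _
      (Equiv.subtypeEquivRight fun x => (mem_oddPositions_blockColouring hn x).symm) fun _ => rfl
  rw [← hsign, chiHom, MonoidHom.finsetProd_apply]
  simp [blockSign]

lemma relSub_eq_stabilizerRelations (hn : (α ++ β).sum = n) :
    relSub k n α β = stabilizerRelations k (blockColouring n α β) := by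
  refine congrArg (Submodule.span _) (Set.ext fun r => ⟨?_, ?_⟩)
  · rintro ⟨σ, rfl⟩
    exact ⟨σ, blockColouring_comp_eq_iff_mem_youngSubgroup.2 σ.2,
      by rw [chiHom_apply_eq_inversionSign k hn]⟩
  · rintro ⟨σ, hσ, rfl⟩
    exact ⟨⟨σ, blockColouring_comp_eq_iff_mem_youngSubgroup.1 hσ⟩,
      by rw [chiHom_apply_eq_inversionSign k hn]⟩

theorem nonempty_SYPM_linearEquiv_weightSpace (hn : (α ++ β).sum = n) :
    Nonempty (SYPM k n α β ≃ₗ[GA k n] weightSpace (Fin n) k {partWeight α β}) := by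
  rw [← colourWeight_blockColouring hn]
  unfold SYPM
  rw [relSub_eq_stabilizerRelations k hn]
  exact nonempty_quotient_stabilizerRelations_linearEquiv k _

end Block

section RearrangeParts

open Equiv (Perm)

lemma cardinalMk_getD_eq_zero (l : List ℕ) :
    Cardinal.mk {i // l.getD i 0 = 0} = Cardinal.aleph0 := by
  have : Infinite {i // l.getD i 0 = 0} := by
    refine Set.infinite_coe_iff.2 ((Set.Ici_infinite l.length).mono fun i hi => ?_)
    exact List.getD_eq_default l 0 hi
  exact Cardinal.mk_eq_aleph0 _

lemma cardinalMk_getD_eq (l : List ℕ) {v : ℕ} (hv : v ≠ 0) :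
    Cardinal.mk {i // l.getD i 0 = v} = l.count v := by
  have hl : (List.range l.length).map (l.getD · 0) = l :=
    List.ext_getElem (by simp) fun i _ hi => by simp [hi]
  have hcount : l.count v = ((Finset.range l.length).filter fun i => l.getD i 0 = v).card := by
    conv_lhs => rw [← hl]
    rw [← Nat.count_eq_card_filter_range, List.count_eq_countP, List.countP_map]
    exact List.countP_congr fun i _ => by simp
  rw [hcount, ← Cardinal.mk_coe_finset]
  refine Cardinal.mk_congr (Equiv.subtypeEquivRight fun i => ?_)
  rw [Finset.mem_filter, Finset.mem_range, iff_and_self]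
  refine fun hi => lt_of_not_ge fun hlen => hv ?_
  rw [← hi, List.getD_eq_default l 0 hlen]

lemma exists_perm_getD_eq_of_count_eq {l l' : List ℕ} (h : ∀ v ≠ 0, l.count v = l'.count v) :
    ∃ e : Perm ℕ, ∀ i, l'.getD (e i) 0 = l.getD i 0 := by
  have fiber (v : ℕ) : Nonempty ({i // l.getD i 0 = v} ≃ {i // l'.getD i 0 = v}) := by
    rw [← Cardinal.eq]
    rcases eq_or_ne v 0 with rfl | hv
    · rw [cardinalMk_getD_eq_zero, cardinalMk_getD_eq_zero]
    · rw [cardinalMk_getD_eq l hv, cardinalMk_getD_eq l' hv, h v hv]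
  exact ⟨Equiv.ofFiberEquiv fun v => (fiber v).some,
    Equiv.ofFiberEquiv_map (f := (l.getD · 0)) (g := (l'.getD · 0)) fun v => (fiber v).some⟩

lemma stabilizerRelations_sumCongr_comp {X A B A' B' : Type*} [LinearOrder X] [Fintype X]
    (k : Type*) [CommRing k] (e : A ≃ A') (e' : B ≃ B') (f : X → A ⊕ B) :
    stabilizerRelations k (Equiv.sumCongr e e' ∘ f) = stabilizerRelations k f := by
  have hodd : oddPositions (Equiv.sumCongr e e' ∘ f) = oddPositions f := by
    ext x
    simp [mem_oddPositions]
  unfold stabilizerRelations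
  simp only [hodd, Function.comp_assoc, (Equiv.sumCongr e e').injective.comp_left.eq_iff]

lemma colourWeight_sumCongr_comp {X A B : Type*} [Fintype X] [DecidableEq A] [DecidableEq B]
    (e : Perm A) (e' : Perm B) (f : X → A ⊕ B) :
    colourWeight (Equiv.sumCongr e e' ∘ f) = colourWeight f ∘ (Equiv.sumCongr e e').symm := by
  funext c
  simp only [colourWeight, Function.comp_apply, Equiv.eq_symm_apply]

theorem nonempty_SYPM_linearEquiv_of_count_eq (k : Type*) [Field k] {n : ℕ} {α β α' β' : List ℕ}
    (hn : (α ++ β).sum = n) (hn' : (α' ++ β').sum = n)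
    (hα : ∀ v ≠ 0, α.count v = α'.count v) (hβ : ∀ v ≠ 0, β.count v = β'.count v) :
    Nonempty (SYPM k n α β ≃ₗ[GA k n] SYPM k n α' β') := by
  obtain ⟨e, he⟩ := exists_perm_getD_eq_of_count_eq hα
  obtain ⟨e', he'⟩ := exists_perm_getD_eq_of_count_eq hβ
  let f := Equiv.sumCongr e e' ∘ blockColouring n α β
  have hweight : colourWeight f = partWeight α' β' := by
    rw [colourWeight_sumCongr_comp, colourWeight_blockColouring hn]
    refine (Equiv.comp_symm_eq _ _ _).2 (funext ?_)
    rintro (i | i)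
    · exact (he i).symm
    · exact (he' i).symm
  have hrel : relSub k n α β = stabilizerRelations k f := by
    rw [relSub_eq_stabilizerRelations k hn, stabilizerRelations_sumCongr_comp]
  obtain ⟨φ⟩ := nonempty_quotient_stabilizerRelations_linearEquiv k f
  obtain ⟨ψ⟩ := nonempty_SYPM_linearEquiv_weightSpace k hn'
  rw [← hweight] at ψ
  exact ⟨(Submodule.quotEquivOfEq _ _ hrel).trans (φ.trans ψ.symm)⟩

end RearrangeParts

section KoszulRelation

open Equiv (Perm)

universe u

section WeightDecomposition

variable {X A B : Type*} [LinearOrder X] [Fintype X] [DecidableEq A] [DecidableEq B]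
  (k : Type*) [CommRing k]

lemma weightSpace_mono {W W' : Set (A ⊕ B → ℕ)} (hW : W ⊆ W') :
    weightSpace X k W ≤ weightSpace X k W' := by
  intro v hv
  refine mem_weightSpace_iff_mem_span.2 ?_
  exact Submodule.span_mono (Set.image_mono (Set.preimage_mono hW))
    (mem_weightSpace_iff_mem_span.1 hv)

lemma disjoint_weightSpace {W W' : Set (A ⊕ B → ℕ)} (hW : Disjoint W W') :
    Disjoint (weightSpace X k W) (weightSpace X k W') := by
  refine Submodule.disjoint_def.2 fun v hv hv' => ?_
  replace hv := (colouringBasis k).mem_span_image.1 (mem_weightSpace_iff_mem_span.1 hv)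
  replace hv' := (colouringBasis k).mem_span_image.1 (mem_weightSpace_iff_mem_span.1 hv')
  refine (colouringBasis k).repr.map_eq_zero_iff.1 (Finsupp.support_eq_empty.1 ?_)
  exact Finset.eq_empty_of_forall_notMem fun f hf =>
    Set.disjoint_left.1 hW (hv (Finset.mem_coe.2 hf)) (hv' (Finset.mem_coe.2 hf))

lemma iSupIndep_weightSpace_singleton :
    iSupIndep fun w : A ⊕ B → ℕ => weightSpace X k {w} := by
  intro w
  have hdisj : Disjoint (weightSpace X k {w}) (weightSpace X k {w}ᶜ) :=
    disjoint_weightSpace k disjoint_compl_right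
  refine hdisj.mono_right (iSup₂_le fun w' hw' => ?_)
  exact weightSpace_mono k (Set.singleton_subset_iff.2 hw')

lemma weightSpace_range {ι : Type*} (w : ι → A ⊕ B → ℕ) :
    weightSpace X k (Set.range w) = ⨆ i, weightSpace X k {w i} := by
  refine le_antisymm (fun v hv => ?_) (iSup_le fun i =>
    weightSpace_mono k (Set.singleton_subset_iff.2 ⟨i, rfl⟩))
  refine (Submodule.span_le (p := (⨆ i, weightSpace X k {w i}).restrictScalars k)).2 ?_
    (mem_weightSpace_iff_mem_span.1 hv)
  rintro _ ⟨f, ⟨i, hi⟩, rfl⟩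
  exact Submodule.mem_iSup_of_mem i (colouringBasis_mem_weightSpace hi.symm)

end WeightDecomposition

lemma isoClass_weightSpace_range {X A B ι : Type} [LinearOrder X] [Fintype X] [DecidableEq A]
    [DecidableEq B] [Fintype ι] (k : Type u) [CommRing k] {w : ι → A ⊕ B → ℕ} (hw : w.Injective) :
    isoClass (MonoidAlgebra k (Perm X)) (weightSpace X k (Set.range w))
      = ∑ i, isoClass (MonoidAlgebra k (Perm X)) (weightSpace X k {w i}) := by
  rw [weightSpace_range]
  exact isoClass_iSup_of_iSupIndep ((iSupIndep_weightSpace_singleton k).comp hw)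

lemma parityWeights_partWeight_cons (α β : List ℕ) (m : ℕ) (ε : ℤˣ) :
    parityWeights 0 0 (partWeight (0 :: α) (0 :: β)) m ε
      = Set.range fun i : (Finset.range (m + 1)).filter fun i => (-1) ^ i = ε =>
          partWeight (i :: α) ((m - i) :: β) := by
  ext w
  constructor
  · rintro ⟨hw, hm, hε⟩
    have hle : w (.inl 0) < m + 1 := by omega
    refine ⟨⟨w (.inl 0), Finset.mem_filter.2 ⟨Finset.mem_range.2 hle, hε⟩⟩, funext ?_⟩
    rintro ((_ | j) | (_ | j))
    · rfl
    · exact (hw (.inl (j + 1)) (by simp) (by simp)).symm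
    · exact Nat.sub_eq_of_eq_add' hm.symm
    · exact (hw (.inr (j + 1)) (by simp) (by simp)).symm
  · rintro ⟨⟨i, hi⟩, rfl⟩
    obtain ⟨hi, hε⟩ := Finset.mem_filter.1 hi
    refine ⟨?_, Nat.add_sub_of_le (Nat.lt_succ_iff.1 (Finset.mem_range.1 hi)), hε⟩
    rintro ((_ | j) | (_ | j)) ha hb
    · exact absurd rfl ha
    · rfl
    · exact absurd rfl hb
    · rfl

lemma isoClass_weightSpace_parityWeights_partWeight (k : Type u) [Field k] {n m : ℕ}
    {α β : List ℕ} (hn : α.sum + β.sum + m = n) (ε : ℤˣ) :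
    isoClass (GA k n) (weightSpace (Fin n) k
        (parityWeights 0 0 (partWeight (0 :: α) (0 :: β)) m ε))
      = ∑ i ∈ Finset.range (m + 1) with (-1) ^ i = ε,
          isoClass (GA k n) (SYPM k n (i :: α) ((m - i) :: β)) := by
  rw [parityWeights_partWeight_cons, isoClass_weightSpace_range k]
  · refine (Finset.sum_congr rfl fun i _ => (isoClass_eq_iff.2 ?_).symm).trans
      (Finset.sum_coe_sort _ fun i => isoClass (GA k n) (SYPM k n (i :: α) ((m - i) :: β)))
    refine nonempty_SYPM_linearEquiv_weightSpace k ?_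
    have hi := Finset.mem_range.1 (Finset.mem_of_mem_filter _ i.2)
    simp only [List.cons_append, List.sum_cons, List.sum_append]
    omega
  · exact fun i j hij => Subtype.ext (congrFun hij (.inl 0))

theorem sum_isoClass_SYPM_eq (k : Type u) [Field k] {n m : ℕ} {α β : List ℕ}
    (hn : α.sum + β.sum + m = n) (hm : (m : k) ≠ 0) :
    ∑ i ∈ Finset.range (m + 1) with (-1 : ℤˣ) ^ i = 1,
        isoClass (GA k n) (SYPM k n (i :: α) ((m - i) :: β))
      = ∑ i ∈ Finset.range (m + 1) with (-1 : ℤˣ) ^ i = -1,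
        isoClass (GA k n) (SYPM k n (i :: α) ((m - i) :: β)) := by
  rw [← isoClass_weightSpace_parityWeights_partWeight k hn,
    ← isoClass_weightSpace_parityWeights_partWeight k hn]
  exact isoClass_eq_iff.2 (nonempty_weightSpace_parityWeights_linearEquiv _ hm.isUnit 1)

end KoszulRelation

section YoungClass

universe u

lemma sum_filter_ne_zero (A : Multiset ℕ) : (A.filter (· ≠ 0)).sum = A.sum := by
  induction A using Multiset.induction_on with
  | empty => rfl
  | cons a A ih => rcases eq_or_ne a 0 with rfl | ha <;> simp_all

/-- The isomorphism class `[M(A|B)]` as a function of the multisets `A` and `B` of parts, whose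
nonzero elements determine it. It is set to `0` unless the parts add up to `n`, so that relations
between the classes need no hypothesis on sizes. -/
def youngClass (k : Type u) [Field k] (n : ℕ) (A B : Multiset ℕ) : IsoClass (GA k n) :=
  if A.sum + B.sum = n then
    isoClass (GA k n) (SYPM k n (A.filter (· ≠ 0)).toList (B.filter (· ≠ 0)).toList)
  else 0

variable (k : Type u) [Field k] {n : ℕ}

lemma isoClass_SYPM_eq_youngClass {α β : List ℕ} (hn : α.sum + β.sum = n) :
    isoClass (GA k n) (SYPM k n α β) = youngClass k n α β := by
  rw [youngClass, if_pos (by simpa using hn)]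
  have hcount (l : List ℕ) (v : ℕ) (hv : v ≠ 0) :
      l.count v = ((l : Multiset ℕ).filter (· ≠ 0)).toList.count v := by
    rw [← Multiset.coe_count, ← Multiset.coe_count, Multiset.coe_toList,
      Multiset.count_filter_of_pos (p := (· ≠ 0)) hv]
  refine isoClass_eq_iff.2
    (nonempty_SYPM_linearEquiv_of_count_eq k ?_ ?_ (hcount α) (hcount β))
  · rwa [List.sum_append]
  · rw [List.sum_append, Multiset.sum_toList, Multiset.sum_toList, sum_filter_ne_zero,
      sum_filter_ne_zero]
    simpa using hn

variable (n) (A B : Multiset ℕ)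

lemma youngClass_zero_cons : youngClass k n (0 ::ₘ A) B = youngClass k n A B := by
  rw [youngClass, Multiset.filter_cons_of_neg A (not_not.2 rfl), Multiset.sum_cons, zero_add]
  rfl

lemma youngClass_filter_ne_zero : youngClass k n A (B.filter (· ≠ 0)) = youngClass k n A B := by
  rw [youngClass, sum_filter_ne_zero, Multiset.filter_eq_self.2 fun _ => Multiset.of_mem_filter]
  rfl

theorem sum_youngClass_eq {m : ℕ} (hm : (m : k) ≠ 0) :
    ∑ i ∈ Finset.range (m + 1) with (-1 : ℤˣ) ^ i = 1, youngClass k n (i ::ₘ A) ((m - i) ::ₘ B)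
      = ∑ i ∈ Finset.range (m + 1) with (-1 : ℤˣ) ^ i = -1,
        youngClass k n (i ::ₘ A) ((m - i) ::ₘ B) := by
  have hsum {i : ℕ} {ε : ℤˣ} (hi : i ∈ (Finset.range (m + 1)).filter fun i => (-1) ^ i = ε) :
      (i ::ₘ A).sum + ((m - i) ::ₘ B).sum = A.sum + B.sum + m := by
    have := Finset.mem_range.1 (Finset.mem_of_mem_filter _ hi)
    simp only [Multiset.sum_cons]
    omega
  by_cases hn : A.sum + B.sum + m = n
  · induction A, B using Quotient.inductionOn₂ with
    | _ α β =>
      have hclass {i : ℕ} {ε : ℤˣ} (hi : i ∈ (Finset.range (m + 1)).filter fun i => (-1) ^ i = ε) :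
          youngClass k n (i ::ₘ α) ((m - i) ::ₘ β)
            = isoClass (GA k n) (SYPM k n (i :: α) ((m - i) :: β)) :=
        (isoClass_SYPM_eq_youngClass k (by simpa using (hsum hi).trans hn)).symm
      refine (Finset.sum_congr rfl fun i => hclass).trans <|
        (sum_isoClass_SYPM_eq k (by simpa using hn) hm).trans <|
          (Finset.sum_congr rfl fun i => hclass).symm
  · have hzero {i : ℕ} {ε : ℤˣ} (hi : i ∈ (Finset.range (m + 1)).filter fun i => (-1) ^ i = ε) :
        youngClass k n (i ::ₘ A) ((m - i) ::ₘ B) = 0 := if_neg ((hsum hi).trans_ne hn)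
    rw [Finset.sum_eq_zero fun i => hzero, Finset.sum_eq_zero fun i => hzero]

end YoungClass

section SignedExpansion

variable {G ι κ : Type*} [AddCommMonoid G]

/-- The relation `x = ∑ i ∈ I, s i • y i` in an additive monoid, with the terms of negative sign
moved to the left-hand side because they cannot be subtracted. -/
def HasSignedExpansion (x : G) (I : Finset ι) (s : ι → ℤˣ) (y : ι → G) : Prop :=
  x + ∑ i ∈ I with s i = -1, y i = ∑ i ∈ I with s i = 1, y i

lemma hasSignedExpansion_singleton {i : ι} {s : ι → ℤˣ} (hs : s i = 1) (y : ι → G) :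
    HasSignedExpansion (y i) {i} s y := by
  simp [HasSignedExpansion, Finset.filter_singleton, hs]

namespace HasSignedExpansion

variable {x : G} {I : Finset ι} {s : ι → ℤˣ} {y : ι → G}

lemma reindex (h : HasSignedExpansion x I s y) {J : Finset κ} {t : κ → ℤˣ} {z : κ → G}
    (e : ι → κ) (he : Set.BijOn e I J) (hs : ∀ i ∈ I, t (e i) = s i)
    (hy : ∀ i ∈ I, z (e i) = y i) : HasSignedExpansion x J t z := by
  have hsum (ε : ℤˣ) : ∑ j ∈ J with t j = ε, z j = ∑ i ∈ I with s i = ε, y i := by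
    rw [Finset.sum_filter, Finset.sum_filter]
    refine (Finset.sum_nbij e he.mapsTo he.injOn he.surjOn fun i hi => ?_).symm
    rw [hs i hi, hy i hi]
  rwa [HasSignedExpansion, hsum, hsum]

lemma sigma (h : HasSignedExpansion x I s y) {τ : ι → Type*} {J : ∀ i, Finset (τ i)}
    {t : ∀ i, τ i → ℤˣ} {z : ∀ i, τ i → G}
    (hy : ∀ i ∈ I, HasSignedExpansion (y i) (J i) (t i) (z i)) :
    HasSignedExpansion x (I.sigma J) (fun a => s a.1 * t a.1 a.2) fun a => z a.1 a.2 := by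
  let negPart (i : ι) : G := ∑ j ∈ J i with t i j = -1, z i j
  have hsum (ε : ℤˣ) : ∑ a ∈ I.sigma J with s a.1 * t a.1 a.2 = ε, z a.1 a.2
      = ∑ i ∈ I with s i = ε, y i + ∑ i ∈ I, negPart i := by
    rw [Finset.sum_filter, Finset.sum_sigma, Finset.sum_filter, ← Finset.sum_add_distrib]
    refine Finset.sum_congr rfl fun i hi => ?_
    rw [← Finset.sum_filter]
    rcases eq_or_ne (s i) ε with rfl | hne
    · simpa [negPart] using (hy i hi).symm
    · have hneg (u : ℤˣ) : s i * u = ε ↔ u = -1 := by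
        rw [Int.units_ne_iff_eq_neg.1 hne, neg_mul, neg_eq_iff_eq_neg, ← mul_neg_one, mul_right_inj]
      simp only [negPart, hneg, if_neg hne, zero_add]
  rw [HasSignedExpansion, hsum, hsum, ← add_assoc, h]

end HasSignedExpansion

end SignedExpansion

section RegularComposition

/-- `(-1)^(|δ|-ℓ(δ))`, as a product over the parts of `δ`. -/
def compositionSign (δ : List ℕ) : ℤˣ := (δ.map fun i => (-1) ^ (i + 1)).prod

lemma compositionSign_append (δ δ' : List ℕ) :
    compositionSign (δ ++ δ') = compositionSign δ * compositionSign δ' := by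
  simp [compositionSign]

/-- The compositions `δ` none of whose nonempty partial sums is divisible by `p`, and with
`b - |δ|` a nonnegative multiple of `p`. -/
structure IsRegularComposition (p b : ℕ) (δ : List ℕ) : Prop where
  pos : ∀ x ∈ δ, 0 < x
  not_dvd : ∀ j < δ.length, ¬ p ∣ (δ.take (j + 1)).sum
  sum_le : δ.sum ≤ b
  dvd_sub : p ∣ b - δ.sum

variable {p b : ℕ}

lemma finite_setOf_isRegularComposition (p b : ℕ) : {δ | IsRegularComposition p b δ}.Finite := by
  refine ((Set.finite_Iic b).biUnion fun m _ =>
    Set.finite_range (Composition.blocks : Composition m → List ℕ)).subset fun δ hδ => ?_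
  exact Set.mem_biUnion (Set.mem_Iic.2 hδ.sum_le) ⟨⟨δ, hδ.pos _, rfl⟩, rfl⟩

/-- The finite set of compositions `δ` satisfying `IsRegularComposition p b δ`. -/
def regularCompositions (p b : ℕ) : Finset (List ℕ) :=
  (finite_setOf_isRegularComposition p b).toFinset

lemma mem_regularCompositions {δ : List ℕ} :
    δ ∈ regularCompositions p b ↔ IsRegularComposition p b δ := by
  simp [regularCompositions]

lemma forall_not_dvd_take_concat_iff {i : ℕ} {δ : List ℕ} :
    (∀ j < (δ ++ [i]).length, ¬ p ∣ ((δ ++ [i]).take (j + 1)).sum)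
      ↔ (∀ j < δ.length, ¬ p ∣ (δ.take (j + 1)).sum) ∧ ¬ p ∣ δ.sum + i := by
  rw [List.length_append, List.length_singleton, Nat.forall_lt_succ_right,
    List.take_of_length_le (i := δ.length + 1) (by simp), List.sum_append, List.sum_singleton]
  refine and_congr_left' (forall₂_congr fun j hj => ?_)
  rw [List.take_append_of_le_length hj]

lemma isRegularComposition_concat_iff (hb : ¬ p ∣ b) {i : ℕ} {δ : List ℕ} :
    IsRegularComposition p b (δ ++ [i])
      ↔ i ∈ Finset.Icc 1 b ∧ IsRegularComposition p (b - i) δ := by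
  have hsub : b - (δ ++ [i]).sum = b - i - δ.sum := by
    rw [List.sum_append, List.sum_singleton, add_comm, Nat.sub_sub]
  constructor
  · intro ⟨hpos, hndvd, hle, hdvd⟩
    rw [List.sum_append, List.sum_singleton] at hle
    refine ⟨Finset.mem_Icc.2 ⟨hpos i (by simp), by omega⟩, fun x hx => hpos x (by simp [hx]),
      (forall_not_dvd_take_concat_iff.1 hndvd).1, by omega, hsub ▸ hdvd⟩
  · intro ⟨hi, hpos, hndvd, hle, hdvd⟩
    rw [Finset.mem_Icc] at hi
    refine ⟨?_, forall_not_dvd_take_concat_iff.2 ⟨hndvd, fun hsum => hb ?_⟩, ?_, hsub ▸ hdvd⟩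
    · simpa [or_imp, forall_and] using ⟨hpos, hi.1⟩
    · have hadd : b - i - δ.sum + (δ.sum + i) = b := by omega
      exact hadd ▸ dvd_add hdvd hsum
    · rw [List.sum_append, List.sum_singleton]
      omega

lemma regularCompositions_of_dvd (hb : p ∣ b) : regularCompositions p b = {[]} := by
  refine Finset.eq_singleton_iff_unique_mem.2 ⟨?_, fun δ hδ => ?_⟩
  · exact mem_regularCompositions.2 ⟨by simp, by simp, by simp, by simpa using hb⟩
  · obtain ⟨-, hndvd, hle, hdvd⟩ := mem_regularCompositions.1 hδ
    rcases List.eq_nil_or_concat' δ with rfl | ⟨δ', i, rfl⟩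
    · rfl
    · refine absurd ((Nat.dvd_sub_iff_right hle hb).1 hdvd) ?_
      simpa using (forall_not_dvd_take_concat_iff.1 hndvd).2

lemma bijOn_concat_regularCompositions (hb : ¬ p ∣ b) :
    Set.BijOn (fun a : Σ _ : ℕ, List ℕ => a.2 ++ [a.1])
      ((Finset.Icc 1 b).sigma fun i => regularCompositions p (b - i))
      (regularCompositions p b) := by
  refine ⟨fun ⟨i, δ⟩ h => ?_, fun ⟨i, δ⟩ _ ⟨j, δ'⟩ _ h => ?_, fun δ hδ => ?_⟩
  · simpa only [Finset.mem_coe, Finset.mem_sigma, mem_regularCompositions,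
      isRegularComposition_concat_iff hb] using h
  · obtain ⟨rfl, rfl⟩ := List.append_singleton_inj.1 h
    rfl
  · rw [Finset.mem_coe, mem_regularCompositions] at hδ
    rcases List.eq_nil_or_concat' δ with rfl | ⟨δ', i, rfl⟩
    · exact absurd (by simpa using hδ.dvd_sub) hb
    · refine ⟨⟨i, δ'⟩, ?_, rfl⟩
      simpa only [Finset.mem_coe, Finset.mem_sigma, mem_regularCompositions] using
        (isRegularComposition_concat_iff hb).1 hδ

/-- The set of tuples `(δ⁽¹⁾, …, δ⁽ˢ⁾)` with `δ⁽ⁱ⁾ ∈ regularCompositions p βᵢ`. -/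
def regularTuples (p : ℕ) : List ℕ → Finset (List (List ℕ))
  | [] => {[]}
  | b :: β => (regularCompositions p b ×ˢ regularTuples p β).image fun x => x.1 :: x.2

lemma mem_regularTuples {β : List ℕ} {Δ : List (List ℕ)} :
    Δ ∈ regularTuples p β ↔ List.Forall₂ (IsRegularComposition p) β Δ := by
  induction β generalizing Δ with
  | nil => simp [regularTuples]
  | cons b β ih =>
    simp [regularTuples, List.forall₂_cons_left_iff, mem_regularCompositions, ih, and_assoc,
      eq_comm]

lemma bijOn_cons_regularTuples (p b : ℕ) (β : List ℕ) :
    Set.BijOn (fun a : Σ _ : List ℕ, List (List ℕ) => a.1 :: a.2)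
      ((regularCompositions p b).sigma fun _ => regularTuples p β) (regularTuples p (b :: β)) := by
  refine ⟨fun ⟨δ, Δ⟩ h => ?_, fun ⟨δ, Δ⟩ _ ⟨δ', Δ'⟩ _ h => ?_, fun Δ hΔ => ?_⟩
  · simpa [regularTuples] using h
  · obtain ⟨rfl, rfl⟩ := List.cons.inj h
    rfl
  · obtain ⟨⟨δ, Δ'⟩, h, rfl⟩ := Finset.mem_image.1 hΔ
    exact ⟨⟨δ, Δ'⟩, by simpa using h, rfl⟩

/-- The remainders `βᵢ - |δ⁽ⁱ⁾|`; the subtraction is exact for regular tuples. -/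
def remainders (β : List ℕ) (Δ : List (List ℕ)) : List ℕ :=
  List.zipWith (fun b δ => b - δ.sum) β Δ

end RegularComposition

section Expansion

universe u

variable (k : Type u) [Field k] (n p : ℕ) [CharP k p] (A B : Multiset ℕ)

lemma hasSignedExpansion_youngClass_cons {b : ℕ} (hb : ¬ p ∣ b) :
    HasSignedExpansion (youngClass k n A (b ::ₘ B)) (Finset.Icc 1 b) (fun i => (-1) ^ (i + 1))
      fun i => youngClass k n (i ::ₘ A) ((b - i) ::ₘ B) := by
  have hb' : (b : k) ≠ 0 := mt (CharP.cast_eq_zero_iff k p b).1 hb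
  have hrange : Finset.range (b + 1) = insert 0 (Finset.Icc 1 b) := by
    rw [Finset.range_eq_Ico]
    exact (Finset.insert_Icc_add_one_left_eq_Icc b.zero_le).symm
  have := sum_youngClass_eq k n A B hb'
  simpa [hrange, HasSignedExpansion, Finset.filter_insert, youngClass_zero_cons, pow_succ,
    neg_eq_iff_eq_neg, add_comm] using this

lemma hasSignedExpansion_youngClass_regularCompositions (b : ℕ) :
    HasSignedExpansion (youngClass k n A (b ::ₘ B)) (regularCompositions p b) compositionSign
      fun δ => youngClass k n (A + δ) ((b - δ.sum) ::ₘ B) := by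
  induction b using Nat.strong_induction_on generalizing A with
  | _ b ih =>
    by_cases hb : p ∣ b
    · rw [regularCompositions_of_dvd hb]
      simpa using hasSignedExpansion_singleton (i := []) (s := compositionSign) rfl
        fun δ => youngClass k n (A + δ) ((b - δ.sum) ::ₘ B)
    · refine ((hasSignedExpansion_youngClass_cons k n p A B hb).sigma fun i hi =>
        ih (b - i) ?_ (i ::ₘ A)).reindex _ (bijOn_concat_regularCompositions hb) ?_ ?_
      · rw [Finset.mem_Icc] at hi
        omega
      · rintro ⟨i, δ⟩ -
        simp [compositionSign, mul_comm]
      · rintro ⟨i, δ⟩ -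
        have hparts : (A + (δ ++ [i] : List ℕ) : Multiset ℕ) = i ::ₘ A + δ := by
          rw [← Multiset.coe_add, Multiset.coe_singleton, ← Multiset.singleton_add]
          abel
        have hrem : b - (δ ++ [i]).sum = b - i - δ.sum := by simp [Nat.sub_sub, add_comm]
        rw [hparts, hrem]

theorem hasSignedExpansion_youngClass_regularTuples (β : List ℕ) :
    HasSignedExpansion (youngClass k n A (β + B)) (regularTuples p β)
      (fun Δ => compositionSign Δ.flatten)
      fun Δ => youngClass k n (A + Δ.flatten) (remainders β Δ + B) := by
  induction β generalizing A B with
  | nil =>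
    simpa [remainders, regularTuples] using hasSignedExpansion_singleton (i := [])
      (s := fun Δ => compositionSign Δ.flatten) rfl
      fun Δ => youngClass k n (A + Δ.flatten) (remainders [] Δ + B)
  | cons b β ih =>
    rw [← Multiset.cons_coe, Multiset.cons_add]
    have hrest (δ : List ℕ) := ih (A + δ) ((b - δ.sum) ::ₘ B)
    simp only [Multiset.add_cons] at hrest
    refine ((hasSignedExpansion_youngClass_regularCompositions k n p A (β + B) b).sigma
      fun δ _ => hrest δ).reindex _ (bijOn_cons_regularTuples p b β) ?_ ?_
    · rintro ⟨δ, Δ⟩ -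
      simp only [List.flatten_cons, compositionSign_append]
    · rintro ⟨δ, Δ⟩ -
      rw [List.flatten_cons, ← Multiset.coe_add, ← add_assoc, remainders, List.zipWith_cons_cons,
        ← Multiset.cons_coe, Multiset.cons_add]
      rfl

end Expansion

section SortDesc

lemma sortDesc_perm (l : List ℕ) : (sortDesc l).Perm l :=
  (List.reverse_perm _).trans (Multiset.coe_eq_coe.1 (Multiset.sort_eq _ _))

lemma pairwise_sortDesc (l : List ℕ) : (sortDesc l).Pairwise (· ≥ ·) :=
  List.pairwise_reverse.2 (Multiset.pairwise_sort _ _)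

lemma sortDesc_eq_iff {l l' : List ℕ} (hl' : l'.Pairwise (· ≥ ·)) :
    sortDesc l = l' ↔ l.Perm l' :=
  ⟨fun h => h ▸ (sortDesc_perm l).symm, fun h =>
    ((sortDesc_perm l).trans h).eq_of_pairwise (fun _ _ _ _ => ge_antisymm)
      (pairwise_sortDesc l) hl'⟩

lemma isPartitionL_sortDesc {l : List ℕ} (hl : ∀ x ∈ l, 0 < x) : IsPartitionL (sortDesc l) :=
  ⟨pairwise_sortDesc l, fun x hx => hl x ((sortDesc_perm l).mem_iff.1 hx)⟩

lemma compositionSign_eq_of_perm {l l' : List ℕ} (h : l.Perm l') :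
    compositionSign l = compositionSign l' :=
  (h.map _).prod_eq

lemma coe_compositionSign (δ : List ℕ) :
    (compositionSign δ : ℤ) = (-1) ^ (δ.sum + δ.length) := by
  induction δ with
  | nil => rfl
  | cons i δ ih =>
    rw [← List.singleton_append, compositionSign_append, Units.val_mul, ih]
    simp only [compositionSign, List.map_cons, List.map_nil, List.prod_singleton,
      Units.val_pow_eq_pow_val, Units.val_neg, Units.val_one, List.sum_append, List.sum_singleton,
      List.length_append, List.length_singleton]
    ring

lemma epsL_eq_compositionSign {l : List ℕ} (hl : ∀ x ∈ l, 0 < x) :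
    epsL l = (compositionSign l : ℤ) := by
  have hle : l.length ≤ l.sum := by simpa using List.card_nsmul_le_sum l 1 hl
  have hsum : l.sum + l.length = l.sum - l.length + 2 * l.length := by omega
  simp [epsL, coe_compositionSign, hsum, pow_add, pow_mul]

end SortDesc

section Counting

variable {p : ℕ} {β : List ℕ} {Δ : List (List ℕ)}

lemma epsL_mul_numCompM {b : ℕ} {l : List ℕ} (hl : MemPnm b p l) :
    epsL l * (numCompM p l : ℤ)
      = ∑ δ ∈ regularCompositions p b with sortDesc δ = l, (compositionSign δ : ℤ) := by
  obtain ⟨⟨hsorted, hpos⟩, hle, hdvd⟩ := hl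
  have hcard : numCompM p l = ((regularCompositions p b).filter (sortDesc · = l)).card := by
    rw [numCompM, ← List.toFinset_card_of_nodup ((List.nodup_dedup _).filter _)]
    congr 1
    ext δ
    simp only [List.mem_toFinset, List.mem_filter, List.mem_dedup, List.mem_permutations,
      decide_eq_true_eq, Finset.mem_filter, mem_regularCompositions, sortDesc_eq_iff hsorted]
    refine ⟨fun ⟨hperm, hndvd⟩ => ⟨⟨fun x hx => hpos x (hperm.mem_iff.1 hx), hndvd, ?_, ?_⟩, hperm⟩,
      fun ⟨hδ, hperm⟩ => ⟨hperm, hδ.not_dvd⟩⟩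
    · rwa [hperm.sum_eq]
    · rwa [hperm.sum_eq]
  rw [hcard, epsL_eq_compositionSign hpos, mul_comm, ← nsmul_eq_mul]
  refine (Finset.sum_eq_card_nsmul fun δ hδ => ?_).symm
  rw [compositionSign_eq_of_perm ((sortDesc_eq_iff hsorted).1 (Finset.mem_filter.1 hδ).2)]

lemma prod_epsL_mul_numCompM {L : List (List ℕ)}
    (hL : List.Forall₂ (fun b l => MemPnm b p l) β L) :
    ∏ i ∈ Finset.range β.length, epsL (L.getD i []) * (numCompM p (L.getD i []) : ℤ)
      = ∑ Δ ∈ regularTuples p β with Δ.map sortDesc = L, (compositionSign Δ.flatten : ℤ) := by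
  induction hL with
  | nil => simp [regularTuples, compositionSign, Finset.filter_singleton]
  | @cons b l β L hl hL ih =>
    rw [List.length_cons, Finset.prod_range_succ']
    simp only [List.getD_cons_succ, List.getD_cons_zero]
    have hbij := bijOn_cons_regularTuples p b β
    rw [ih, epsL_mul_numCompM hl, mul_comm, Finset.sum_mul_sum]
    simp only [Finset.sum_filter]
    rw [← Finset.sum_nbij _ hbij.mapsTo hbij.injOn hbij.surjOn fun _ _ => rfl, Finset.sum_sigma]
    refine Finset.sum_congr rfl fun δ _ => ?_
    split_ifs with hδ <;> simp [hδ, compositionSign_append]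

lemma finsum_mem_sum_filter_eq {ι κ M : Type*} [AddCommMonoid M] [DecidableEq κ] (s : Finset ι)
    (g : ι → κ) (f : ι → M) (V : Set κ) [DecidablePred (· ∈ V)] :
    ∑ᶠ v ∈ V, ∑ i ∈ s with g i = v, f i = ∑ i ∈ s with g i ∈ V, f i := by
  have hsupport : V ∩ Function.support (fun v => ∑ i ∈ s with g i = v, f i)
      = ↑((s.image g).filter (· ∈ V)) ∩ Function.support fun v => ∑ i ∈ s with g i = v, f i := by
    ext v
    simp only [Set.mem_inter_iff, Finset.coe_filter, Set.mem_ofPred_eq, Finset.mem_image]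
    refine and_congr_left fun hv => (and_iff_right ?_).symm
    obtain ⟨i, hi, -⟩ := Finset.exists_ne_zero_of_sum_ne_zero hv
    exact ⟨i, Finset.mem_filter.1 hi⟩
  rw [finsum_mem_eq_sum_of_inter_support_eq _ hsupport, Finset.sum_filter,
    Finset.sum_filter, ← Finset.sum_fiberwise_of_maps_to fun i hi => Finset.mem_image_of_mem g hi]
  refine Finset.sum_congr rfl fun v _ => ?_
  split_ifs with hv
  · exact Finset.sum_congr rfl fun i hi => by rw [(Finset.mem_filter.1 hi).2, if_pos hv]
  · exact (Finset.sum_eq_zero fun i hi => by rw [(Finset.mem_filter.1 hi).2, if_neg hv]).symm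

/-- The pair `(ξ, μ)` of partitions for which `pμ` consists of the nonzero remainders of `β` modulo
the tuple `Δ`, and `ξ` of the parts of `Δ`. -/
def expansionIndex (p : ℕ) (β : List ℕ) (Δ : List (List ℕ)) : List ℕ × List ℕ :=
  (sortDesc Δ.flatten,
    sortDesc (((remainders β Δ).filter fun x => decide (x ≠ 0)).map (· / p)))

lemma sum_flatten_add_sum_remainders (hΔ : Δ ∈ regularTuples p β) :
    Δ.flatten.sum + (remainders β Δ).sum = β.sum := by
  rw [mem_regularTuples] at hΔ
  induction hΔ with
  | nil => rfl
  | cons hδ _ ih =>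
    have := hδ.sum_le
    simp only [remainders, List.zipWith_cons_cons, List.flatten_cons, List.sum_append,
      List.sum_cons] at ih ⊢
    omega

lemma dvd_of_mem_remainders (hΔ : Δ ∈ regularTuples p β) : ∀ x ∈ remainders β Δ, p ∣ x := by
  rw [mem_regularTuples] at hΔ
  induction hΔ with
  | nil => simp [remainders]
  | cons hδ _ ih =>
    exact List.forall_mem_cons.2 ⟨hδ.dvd_sub, ih⟩

lemma pos_of_mem_flatten (hΔ : Δ ∈ regularTuples p β) : ∀ x ∈ Δ.flatten, 0 < x := by
  rw [mem_regularTuples] at hΔ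
  induction hΔ with
  | nil => simp
  | cons hδ _ ih =>
    exact List.forall_mem_append.2 ⟨hδ.pos, ih⟩

lemma map_mul_map_div {l : List ℕ} (hl : ∀ x ∈ l, p ∣ x) : (l.map (· / p)).map (p * ·) = l := by
  rw [List.map_map]
  exact (List.map_congr_left fun x hx => Nat.mul_div_cancel' (hl x hx)).trans (List.map_id l)

lemma perm_map_mul_iff {l μ : List ℕ} (hl : ∀ x ∈ l, p ∣ x ∧ x ≠ 0) :
    l.Perm (μ.map (p * ·)) ↔ (l.map (· / p)).Perm μ := by
  have hmap := map_mul_map_div fun x hx => (hl x hx).1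
  refine ⟨fun h => ?_, fun h => by simpa only [hmap] using h.map (p * ·)⟩
  have hcancel : (μ.map (p * ·)).map (· / p) = μ := by
    rw [List.map_map]
    refine (List.map_congr_left fun x hx => ?_).trans (List.map_id μ)
    have hpx := (hl _ (h.mem_iff.2 (List.mem_map_of_mem hx))).2
    exact Nat.mul_div_cancel_left x (Nat.pos_of_ne_zero (left_ne_zero_of_mul hpx))
  simpa only [hcancel] using h.map (· / p)

lemma dvd_and_ne_zero_of_mem_filter_remainders (hΔ : Δ ∈ regularTuples p β) :
    ∀ x ∈ (remainders β Δ).filter fun x => decide (x ≠ 0), p ∣ x ∧ x ≠ 0 := fun x hx =>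
  ⟨dvd_of_mem_remainders hΔ x (List.mem_of_mem_filter hx), by simpa using List.of_mem_filter hx⟩

lemma coe_map_mul_expansionIndex_snd (hΔ : Δ ∈ regularTuples p β) :
    ((expansionIndex p β Δ).2.map (p * ·) : Multiset ℕ)
      = (remainders β Δ : Multiset ℕ).filter (· ≠ 0) := by
  rw [Multiset.filter_coe, Multiset.coe_eq_coe]
  exact ((perm_map_mul_iff (dvd_and_ne_zero_of_mem_filter_remainders hΔ)).2
    (sortDesc_perm _).symm).symm

lemma condPair_expansionIndex {n : ℕ} {α : List ℕ} (hn : α.sum + β.sum = n)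
    (hΔ : Δ ∈ regularTuples p β) : CondPair p n α (expansionIndex p β Δ) := by
  refine ⟨isPartitionL_sortDesc (pos_of_mem_flatten hΔ), isPartitionL_sortDesc ?_, ?_⟩
  · rw [List.forall_mem_map]
    intro x hx
    obtain ⟨hdvd, hx0⟩ := dvd_and_ne_zero_of_mem_filter_remainders hΔ x hx
    have hp : p ≠ 0 := fun hp => hx0 (zero_dvd_iff.1 (hp ▸ hdvd))
    exact Nat.div_pos (Nat.le_of_dvd (Nat.pos_of_ne_zero hx0) hdvd) (Nat.pos_of_ne_zero hp)
  · have hξ : (expansionIndex p β Δ).1.sum = Δ.flatten.sum := (sortDesc_perm _).sum_eq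
    have hμ : p * (expansionIndex p β Δ).2.sum = (remainders β Δ).sum := by
      have := congrArg Multiset.sum (coe_map_mul_expansionIndex_snd hΔ)
      rwa [sum_filter_ne_zero, Multiset.sum_coe, Multiset.sum_coe, List.sum_map_mul_left,
        List.map_id'] at this
    have := sum_flatten_add_sum_remainders hΔ
    omega

lemma forall₂_memPnm_iff {L : List (List ℕ)} :
    List.Forall₂ (fun b l => MemPnm b p l) β L ↔
      L.length = β.length ∧ ∀ i < β.length, MemPnm (β.getD i 0) p (L.getD i []) := by
  rw [List.forall₂_iff_get, eq_comm]
  refine and_congr_right fun hlen => forall₂_congr fun i hi => ?_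
  have hi' : i < L.length := hlen ▸ hi
  simp [hi, hi']

lemma forall₂_memPnm_map_sortDesc (hΔ : Δ ∈ regularTuples p β) :
    List.Forall₂ (fun b l => MemPnm b p l) β (Δ.map sortDesc) := by
  rw [List.forall₂_map_right_iff]
  refine (mem_regularTuples.1 hΔ).imp fun b δ hδ => ⟨isPartitionL_sortDesc hδ.pos, ?_, ?_⟩
  · exact (sortDesc_perm δ).sum_eq.trans_le hδ.sum_le
  · exact (sortDesc_perm δ).sum_eq ▸ hδ.dvd_sub

lemma map_range_sub_sum_eq_remainders {L : List (List ℕ)} (hL : L.length = β.length) :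
    ((List.range β.length).map fun i => β.getD i 0 - (L.getD i []).sum) = remainders β L := by
  refine List.ext_getElem (by simp [remainders, hL]) fun i hi _ => ?_
  have hi' : i < β.length := by simpa using hi
  simp [remainders, hi', hL]

lemma remainders_map_sortDesc (β : List ℕ) (Δ : List (List ℕ)) :
    remainders β (Δ.map sortDesc) = remainders β Δ := by
  simp only [remainders, List.zipWith_map_right, (sortDesc_perm _).sum_eq]

lemma flatten_map_sortDesc_perm (Δ : List (List ℕ)) :
    (Δ.map sortDesc).flatten.Perm Δ.flatten := by
  induction Δ with
  | nil => rfl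
  | cons δ Δ ih => exact (sortDesc_perm δ).append ih

lemma vmem_map_sortDesc_iff {ξ μ : List ℕ} (hξ : IsPartitionL ξ) (hμ : IsPartitionL μ)
    (hΔ : Δ ∈ regularTuples p β) :
    Vmem p β ξ μ (Δ.map sortDesc) ↔ expansionIndex p β Δ = (ξ, μ) := by
  have hmem := forall₂_memPnm_map_sortDesc hΔ
  rw [Vmem, ← and_assoc, ← forall₂_memPnm_iff, and_iff_right hmem,
    map_range_sub_sum_eq_remainders hmem.length_eq.symm, remainders_map_sortDesc,
    perm_map_mul_iff (dvd_and_ne_zero_of_mem_filter_remainders hΔ), expansionIndex, Prod.mk.injEq,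
    sortDesc_eq_iff hξ.1, sortDesc_eq_iff hμ.1, (flatten_map_sortDesc_perm Δ).congr_left]

lemma compositionSign_expansionIndex_fst (p : ℕ) (β : List ℕ) (Δ : List (List ℕ)) :
    compositionSign (expansionIndex p β Δ).1 = compositionSign Δ.flatten :=
  compositionSign_eq_of_perm (sortDesc_perm _)

theorem cB_eq_compositionSign_mul_card {ξ μ : List ℕ} (hξ : IsPartitionL ξ)
    (hμ : IsPartitionL μ) :
    cB p β ξ μ = compositionSign ξ
      * ((regularTuples p β).filter (expansionIndex p β · = (ξ, μ))).card := by
  classical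
  calc cB p β ξ μ
    _ = ∑ᶠ L ∈ {L | Vmem p β ξ μ L},
          ∑ Δ ∈ regularTuples p β with Δ.map sortDesc = L, (compositionSign Δ.flatten : ℤ) :=
        finsum_mem_congr rfl fun L hL =>
          prod_epsL_mul_numCompM (forall₂_memPnm_iff.2 ⟨hL.1, hL.2.1⟩)
    _ = ∑ Δ ∈ regularTuples p β with Vmem p β ξ μ (Δ.map sortDesc),
          (compositionSign Δ.flatten : ℤ) := finsum_mem_sum_filter_eq _ _ _ _
    _ = ∑ Δ ∈ regularTuples p β with expansionIndex p β Δ = (ξ, μ),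
          (compositionSign Δ.flatten : ℤ) := by
        rw [Finset.filter_congr fun Δ hΔ => vmem_map_sortDesc_iff hξ hμ hΔ]
    _ = _ := by
        rw [mul_comm, ← nsmul_eq_mul]
        refine Finset.sum_eq_card_nsmul fun Δ hΔ => ?_
        rw [← compositionSign_expansionIndex_fst p β, (Finset.mem_filter.1 hΔ).2]

lemma filter_expansionIndex_eq_empty {n : ℕ} {α : List ℕ} (hn : α.sum + β.sum = n)
    {q : List ℕ × List ℕ} (hq : ¬ CondPair p n α q) :
    (regularTuples p β).filter (expansionIndex p β · = q) = ∅ :=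
  Finset.filter_eq_empty_iff.2 fun _ hΔ h => hq (h ▸ condPair_expansionIndex hn hΔ)

lemma card_filter_filter_expansionIndex (ε : ℤˣ) (q : List ℕ × List ℕ) :
    (((regularTuples p β).filter (compositionSign ·.flatten = ε)).filter
        (expansionIndex p β · = q)).card
      = if compositionSign q.1 = ε then ((regularTuples p β).filter (expansionIndex p β · = q)).card
        else 0 := by
  rw [← Finset.card_empty, ← apply_ite, Finset.filter_comm, ← Finset.filter_const]
  congr 1
  refine Finset.filter_congr fun Δ hΔ => ?_
  rw [← (Finset.mem_filter.1 hΔ).2, compositionSign_expansionIndex_fst]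

lemma posMult_eq_card {n : ℕ} {α : List ℕ} (hn : α.sum + β.sum = n) (q : List ℕ × List ℕ) :
    posMult p n α β q = (((regularTuples p β).filter (compositionSign ·.flatten = 1)).filter
      (expansionIndex p β · = q)).card := by
  rw [card_filter_filter_expansionIndex, posMult]
  by_cases hq : CondPair p n α q
  · rw [cB_eq_compositionSign_mul_card hq.1 hq.2.1]
    generalize ((regularTuples p β).filter (expansionIndex p β · = q)).card = m
    rcases Int.units_eq_one_or (compositionSign q.1) with h | h
    · simp +contextual [hq, h, eq_comm]
    · simp [hq, h]
  · simp [hq, filter_expansionIndex_eq_empty hn hq]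

lemma negMult_eq_card {n : ℕ} {α : List ℕ} (hn : α.sum + β.sum = n) (q : List ℕ × List ℕ) :
    negMult p n α β q = (((regularTuples p β).filter (compositionSign ·.flatten = -1)).filter
      (expansionIndex p β · = q)).card := by
  rw [card_filter_filter_expansionIndex, negMult]
  by_cases hq : CondPair p n α q
  · rw [cB_eq_compositionSign_mul_card hq.1 hq.2.1]
    generalize ((regularTuples p β).filter (expansionIndex p β · = q)).card = m
    rcases Int.units_eq_one_or (compositionSign q.1) with h | h
    · simp [hq, h]
    · simp +contextual [hq, h, eq_comm]
  · simp [hq, filter_expansionIndex_eq_empty hn hq]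

end Counting

section Main

universe u

variable (k : Type u) [Field k] (p : ℕ) {n : ℕ}

lemma isoClass_SYPM_expansionIndex {α β : List ℕ} (hn : α.sum + β.sum = n) {Δ : List (List ℕ)}
    (hΔ : Δ ∈ regularTuples p β) :
    isoClass (GA k n) (SYPM k n (sortDesc (α ++ (expansionIndex p β Δ).1))
        ((expansionIndex p β Δ).2.map (p * ·)))
      = youngClass k n (α + Δ.flatten) (remainders β Δ) := by
  have hsum := (condPair_expansionIndex hn hΔ).2.2
  have hperm : (sortDesc (α ++ (expansionIndex p β Δ).1)).Perm (α ++ Δ.flatten) :=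
    (sortDesc_perm _).trans ((sortDesc_perm _).append_left α)
  rw [isoClass_SYPM_eq_youngClass, Multiset.coe_eq_coe.2 hperm, coe_map_mul_expansionIndex_snd hΔ,
    youngClass_filter_ne_zero, Multiset.coe_add]
  rwa [(sortDesc_perm _).sum_eq, List.sum_append, List.sum_map_mul_left, List.map_id']

lemma isoClass_directSum_SYPM {α β : List ℕ} (hn : α.sum + β.sum = n) (ε : ℤˣ)
    {m : List ℕ × List ℕ → ℕ}
    (hm : ∀ q, m q = (((regularTuples p β).filter (compositionSign ·.flatten = ε)).filter
      (expansionIndex p β · = q)).card) :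
    isoClass (GA k n) (⨁ t : Σ q : List ℕ × List ℕ, Fin (m q),
        SYPM k n (sortDesc (α ++ t.1.1)) (t.1.2.map (p * ·)))
      = ∑ Δ ∈ regularTuples p β with compositionSign Δ.flatten = ε,
        youngClass k n (α + Δ.flatten) (remainders β Δ) :=
  (isoClass_directSum_sigma_fin_card _ _ hm fun q =>
    SYPM k n (sortDesc (α ++ q.1)) (q.2.map (p * ·))).trans <|
      Finset.sum_congr rfl fun Δ hΔ =>
        isoClass_SYPM_expansionIndex k p hn (Finset.mem_of_mem_filter Δ hΔ)

theorem stmt12_general [CharP k p] (α β : List ℕ) (hn : α.sum + β.sum = n) :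
    Nonempty (
      (SYPM k n α β ×
        ⨁ t : Σ q : List ℕ × List ℕ, Fin (negMult p n α β q),
          SYPM k n (sortDesc (α ++ t.1.1)) (t.1.2.map (p * ·)))
      ≃ₗ[GA k n]
      ⨁ t : Σ q : List ℕ × List ℕ, Fin (posMult p n α β q),
          SYPM k n (sortDesc (α ++ t.1.1)) (t.1.2.map (p * ·))) := by
  have hexpansion := hasSignedExpansion_youngClass_regularTuples k n p α 0 β
  simp only [add_zero, HasSignedExpansion] at hexpansion
  rw [← isoClass_SYPM_eq_youngClass k hn, ← isoClass_directSum_SYPM k p hn 1 (posMult_eq_card hn),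
    ← isoClass_directSum_SYPM k p hn (-1) (negMult_eq_card hn), ← isoClass_prod] at hexpansion
  exact isoClass_eq_iff.1 hexpansion

end Main

theorem stmt12 (k : Type*) [Field k] (p : ℕ) (hp : p.Prime) (hodd : Odd p) [CharP k p]
    {n : ℕ} (α β : List ℕ) (hα : ∀ x ∈ α, 0 < x) (hβ : ∀ x ∈ β, 0 < x)
    (hn : α.sum + β.sum = n) :
    Nonempty (
      (SYPM k n α β ×
        ⨁ t : Σ q : List ℕ × List ℕ, Fin (negMult p n α β q),
          SYPM k n (sortDesc (α ++ t.1.1)) (t.1.2.map (p * ·)))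
      ≃ₗ[GA k n]
      ⨁ t : Σ q : List ℕ × List ℕ, Fin (posMult p n α β q),
          SYPM k n (sortDesc (α ++ t.1.1)) (t.1.2.map (p * ·))) :=
  stmt12_general k p α β hn
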